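/- arXiv:1211.2224 — 6 statements merged into one kernel-verified Lean document; each statement's English description precedes it below -/
import Mathlib

section
/- Let Ω = {(x₁,x₂) ∈ ℝ² : 0 < |x₂| < x₁ < h} be an isosceles right triangle with hypotenuse of length 2h, and let Γ = {x₁ = h, x₂ ∈ [−h,h]} be the hypotenuse. Let z̃₀ be the unique root of the equation z·cot(z) + 1 = 0 in the interval (0,π). Then the sharp constant C₁(Ω,Γ) in the inequality ‖w‖_{L²(Ω)} ≤ C₁‖∇w‖_{L²(Ω)} for all w ∈ H̃¹(Ω,Γ) is equal to h/z̃₀. -/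
open MeasureTheory Real

/-- One-dimensional Robin type inequality via a Riccati substitution. -/
lemma riccati_ineq {h : ℝ} (hh : 0 < h) (f g : ℝ → ℝ) (c : ℝ) (hf : Continuous f)
    (hd : ∀ x, x ≠ c → HasDerivAt f (g x) x)
    (hg : IntervalIntegrable g volume 0 h)
    (hg2 : IntervalIntegrable (fun x => (g x) ^ 2) volume 0 h)
    (hf0 : f 0 = 0) {κ δ : ℝ} (hκ : 0 < κ) (hδ : 0 < δ) (hπ : κ * h + δ < π) :
    κ ^ 2 * ∫ x in (0:ℝ)..h, (f x) ^ 2 ≤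
      (∫ x in (0:ℝ)..h, (g x) ^ 2) - κ * (cos (κ * h + δ) / sin (κ * h + δ)) * (f h) ^ 2 := by
  set a : ℝ → ℝ := fun x => κ * (cos (κ * x + δ) / sin (κ * x + δ)) with ha
  have hs : ∀ x ∈ Set.Icc 0 h, 0 < sin (κ * x + δ) := by
    intro x hx
    apply Real.sin_pos_of_pos_of_lt_pi
    · have := mul_nonneg hκ.le hx.1
      linarith
    · have := mul_le_mul_of_nonneg_left hx.2 hκ.le
      linarith
  have had : ∀ x ∈ Set.Icc 0 h, HasDerivAt a (-κ ^ 2 - (a x) ^ 2) x := by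
    intro x hx
    have h1 : HasDerivAt (fun x => κ * x + δ) κ x := by
      simpa using ((hasDerivAt_id x).const_mul κ).add_const δ
    have h2 := (h1.cos.div h1.sin (hs x hx).ne').const_mul κ
    refine HasDerivAt.congr_deriv h2 ?_
    have := (hs x hx).ne'
    simp only [ha]
    field_simp
  have hac : ContinuousOn a (Set.Icc 0 h) := fun x hx =>
    (had x hx).continuousAt.continuousWithinAt
  have hac' : ContinuousOn a (Set.uIcc 0 h) := by rwa [Set.uIcc_of_le hh.le]
  have hfc : ContinuousOn f (Set.uIcc 0 h) := hf.continuousOn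
  have i1 : IntervalIntegrable (fun x => g x * (2 * f x * a x)) volume 0 h :=
    hg.mul_continuousOn (by fun_prop)
  have i2 : IntervalIntegrable (fun x => (f x) ^ 2 * (-κ ^ 2 - (a x) ^ 2)) volume 0 h :=
    ContinuousOn.intervalIntegrable (by fun_prop)
  have i3 : IntervalIntegrable (fun x => κ ^ 2 * (f x) ^ 2) volume 0 h :=
    ContinuousOn.intervalIntegrable (by fun_prop)
  have key := integral_eq_of_hasDerivAt_off_countable_of_le (fun x => (f x) ^ 2 * a x)
    (fun x => g x * (2 * f x * a x) + (f x) ^ 2 * (-κ ^ 2 - (a x) ^ 2)) hh.le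
    (s := {c}) (Set.countable_singleton c) (by fun_prop)
    (by
      intro x hx
      have hx1 : x ∈ Set.Icc 0 h := Set.Ioo_subset_Icc_self hx.1
      have h2 := ((hd x (by simpa using hx.2)).pow 2).mul (had x hx1)
      refine HasDerivAt.congr_deriv h2 ?_
      simp
      ring) (i1.add i2)
  have pos : 0 ≤ ∫ x in (0:ℝ)..h, (((g x) ^ 2 - κ ^ 2 * (f x) ^ 2) -
      (g x * (2 * f x * a x) + (f x) ^ 2 * (-κ ^ 2 - (a x) ^ 2))) := by
    apply intervalIntegral.integral_nonneg hh.le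
    intro x _
    nlinarith [sq_nonneg (g x - f x * a x)]
  rw [intervalIntegral.integral_sub (hg2.sub i3) (i1.add i2), key,
    intervalIntegral.integral_sub hg2 i3, intervalIntegral.integral_const_mul] at pos
  simp only [hf0] at pos
  simp only [ha] at pos
  linarith

/-- Limit form used for the even part. -/
lemma robin_ineq {h : ℝ} (hh : 0 < h) {z : ℝ} (hz : z ∈ Set.Ioo 0 π)
    (hcot : z * cot z + 1 = 0) (f g : ℝ → ℝ) (hg : Continuous g)
    (hd : ∀ x, HasDerivAt f (g x) x) (hf0 : f 0 = 0) :
    (z / h) ^ 2 * ∫ x in (0:ℝ)..h, (f x) ^ 2 ≤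
      (∫ x in (0:ℝ)..h, (g x) ^ 2) + (f h) ^ 2 / h := by
  have hf : Continuous f := continuous_iff_continuousAt.2 fun x => (hd x).continuousAt
  have hz0 : 0 < z := hz.1
  have hz' : cos z / sin z = - 1 / z := by
    rw [Real.cot_eq_cos_div_sin] at hcot
    rw [eq_div_iff hz0.ne']
    linarith
  have main : ∀ δ ∈ Set.Ioo 0 z, ((z - δ) / h) ^ 2 * ∫ x in (0:ℝ)..h, (f x) ^ 2 ≤
      (∫ x in (0:ℝ)..h, (g x) ^ 2) + (f h) ^ 2 / h := by
    intro δ hδ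
    have e : (z - δ) / h * h + δ = z := by field_simp; ring
    have := riccati_ineq hh f g 0 hf (fun x _ => hd x) (hg.intervalIntegrable _ _)
      ((hg.pow 2).intervalIntegrable _ _) hf0 (κ := (z - δ) / h) (δ := δ)
      (div_pos (by linarith [hδ.2]) hh) hδ.1 (by rw [e]; exact hz.2)
    rw [e, hz'] at this
    refine this.trans ?_
    have : (z - δ) / h * (-1 / z) * f h ^ 2 = - ((z - δ) / z) * (f h ^ 2 / h) := by
      field_simp
    rw [this]
    have h1 : (z - δ) / z ≤ 1 := by rw [div_le_one hz0]; linarith [hδ.1]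
    have h2 : 0 ≤ f h ^ 2 / h := by positivity
    nlinarith
  have lim : Filter.Tendsto (fun δ : ℝ => ((z - δ) / h) ^ 2 * ∫ x in (0:ℝ)..h, (f x) ^ 2)
      (nhdsWithin 0 (Set.Ioi 0)) (nhds (((z - 0) / h) ^ 2 * ∫ x in (0:ℝ)..h, (f x) ^ 2)) := by
    apply Filter.Tendsto.mono_left _ nhdsWithin_le_nhds
    apply Continuous.tendsto (f := fun δ : ℝ => ((z - δ) / h) ^ 2 * ∫ x in (0:ℝ)..h, (f x) ^ 2)
    fun_prop
  rw [sub_zero] at lim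
  apply le_of_tendsto lim
  filter_upwards [Ioo_mem_nhdsGT hz0] with δ hδ using main δ hδ

/-- bounded measurable functions on the square -/
def BM (h : ℝ) (F : ℝ × ℝ → ℝ) : Prop :=
  Measurable F ∧ ∃ C, ∀ x ∈ Set.Icc 0 h, ∀ y ∈ Set.Icc 0 h, |F (x, y)| ≤ C

/-- Lebesgue measure on the interval -/
noncomputable def mu (h : ℝ) : Measure ℝ := volume.restrict (Set.Ioc 0 h)

instance (h : ℝ) : IsFiniteMeasure (mu h) := by unfold mu; infer_instance

lemma ae_mu (h : ℝ) : ∀ᵐ x ∂(mu h), x ∈ Set.Icc 0 h := by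
  unfold mu
  filter_upwards [ae_restrict_mem measurableSet_Ioc] with x hx
  exact Set.Ioc_subset_Icc_self hx

lemma prod_mu (h : ℝ) : (mu h).prod (mu h) =
    (volume : Measure (ℝ × ℝ)).restrict (Set.Ioc 0 h ×ˢ Set.Ioc 0 h) := by
  unfold mu; rw [Measure.prod_restrict]; rfl

lemma ii_mu {h : ℝ} (hh : 0 < h) (f : ℝ → ℝ) : ∫ x in (0:ℝ)..h, f x = ∫ x, f x ∂(mu h) := by
  rw [intervalIntegral.integral_of_le hh.le]; rfl

namespace BM
variable {h : ℝ} {F G : ℝ × ℝ → ℝ}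

lemma of_cont (hF : Continuous F) : BM h F := by
  refine ⟨hF.measurable, ?_⟩
  obtain ⟨C, hC⟩ := ((isCompact_Icc (a := (0:ℝ)) (b := h)).prod
    (isCompact_Icc (a := (0:ℝ)) (b := h))).exists_bound_of_continuousOn hF.continuousOn
  exact ⟨C, fun x hx y hy => by simpa using hC (x, y) ⟨hx, hy⟩⟩

lemma add (hF : BM h F) (hG : BM h G) : BM h (fun p => F p + G p) := by
  obtain ⟨m, C, hC⟩ := hF
  obtain ⟨m', C', hC'⟩ := hG
  exact ⟨m.add m', C + C', fun x hx y hy =>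
    (abs_add_le _ _).trans (add_le_add (hC x hx y hy) (hC' x hx y hy))⟩

lemma mul (hF : BM h F) (hG : BM h G) : BM h (fun p => F p * G p) := by
  obtain ⟨m, C, hC⟩ := hF
  obtain ⟨m', C', hC'⟩ := hG
  refine ⟨m.mul m', C * C', fun x hx y hy => ?_⟩
  rw [abs_mul]
  exact mul_le_mul (hC x hx y hy) (hC' x hx y hy) (abs_nonneg _)
    ((abs_nonneg _).trans (hC x hx y hy))

lemma sq (hF : BM h F) : BM h (fun p => F p ^ 2) := by
  simpa only [pow_two] using hF.mul hF

lemma integrable (hF : BM h F) : Integrable F ((mu h).prod (mu h)) := by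
  obtain ⟨m, C, hC⟩ := hF
  refine Integrable.of_bound m.aestronglyMeasurable C ?_
  rw [prod_mu]
  filter_upwards [ae_restrict_mem (measurableSet_Ioc.prod measurableSet_Ioc)] with p hp
  exact hC _ (Set.Ioc_subset_Icc_self hp.1) _ (Set.Ioc_subset_Icc_self hp.2)

lemma slice (hh : 0 < h) (hF : BM h F) {y : ℝ} (hy : y ∈ Set.Icc 0 h) :
    IntervalIntegrable (fun x => F (x, y)) volume 0 h := by
  obtain ⟨m, C, hC⟩ := hF
  rw [intervalIntegrable_iff_integrableOn_Ioc_of_le hh.le]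
  refine Integrable.of_bound (m.comp (by fun_prop)).aestronglyMeasurable C ?_
  filter_upwards [ae_restrict_mem measurableSet_Ioc] with x hx
  exact hC _ (Set.Ioc_subset_Icc_self hx) _ hy

end BM

set_option maxHeartbeats 1000000 in
lemma even_square {h : ℝ} (hh : 0 < h) {z : ℝ} (hz : z ∈ Set.Ioo 0 π)
    (hcot : z * cot z + 1 = 0) (U G : ℝ × ℝ → ℝ) (hU : Continuous U)
    (hsym : ∀ x y, U (x, y) = U (y, x)) (hG : BM h G)
    (hd : ∀ y x, x ≠ y → HasDerivAt (fun x => U (x, y)) (G (x, y)) x)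
    (hmean : ∫ y in (0:ℝ)..h, U (h, y) = 0) :
    (z / h) ^ 2 * ∫ p, U p ^ 2 ∂((mu h).prod (mu h)) ≤
      2 * ∫ p, G p ^ 2 ∂((mu h).prod (mu h)) := by
  set m : ℝ → ℝ := fun x => h⁻¹ * ∫ y in (0:ℝ)..h, U (x, y) with hm
  have hmc : Continuous m := by
    apply Continuous.const_mul
    exact intervalIntegral.continuous_parametric_intervalIntegral_of_continuous'
      (f := fun x y => U (x, y)) (by simpa [Function.uncurry_def] using hU) 0 h
  have hm1 : ∀ x, ∫ y, U (x, y) ∂(mu h) = h * m x := by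
    intro x
    rw [← ii_mu hh, hm]
    field_simp
  have hm2 : ∀ y, ∫ x, U (x, y) ∂(mu h) = h * m y := by
    intro y
    rw [← hm1]
    simp_rw [hsym _ y]
  set c : ℝ := ∫ x, m x ∂(mu h) with hc
  set M : ℝ := ∫ x, m x ^ 2 ∂(mu h) with hM
  have one : ∫ _, (1:ℝ) ∂(mu h) = h := by
    rw [← ii_mu hh]; simp
  have I1 : ∫ p, U p * m p.1 ∂((mu h).prod (mu h)) = h * M := by
    rw [integral_prod _ (BM.of_cont (by fun_prop)).integrable]
    simp only [integral_mul_const, hm1]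
    rw [hM, ← integral_const_mul]
    congr 1; ext x; ring
  have I2 : ∫ p, U p * m p.2 ∂((mu h).prod (mu h)) = h * M := by
    rw [integral_prod_symm _ (BM.of_cont (by fun_prop)).integrable]
    simp only [integral_mul_const, hm2]
    rw [hM, ← integral_const_mul]
    congr 1; ext x; ring
  have I3 : ∫ p, m p.1 ^ 2 ∂((mu h).prod (mu h)) = h * M := by
    have := integral_prod_mul (μ := mu h) (ν := mu h) (fun x => m x ^ 2) (fun _ => (1:ℝ))
    simp only [mul_one] at this
    rw [this, one, mul_comm]
  have I4 : ∫ p, m p.2 ^ 2 ∂((mu h).prod (mu h)) = h * M := by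
    have := integral_prod_mul (μ := mu h) (ν := mu h) (fun _ => (1:ℝ)) (fun x => m x ^ 2)
    simp only [one_mul] at this
    rw [this, one]
  have I5 : ∫ p, m p.1 * m p.2 ∂((mu h).prod (mu h)) = c ^ 2 := by
    rw [integral_prod_mul (μ := mu h) (ν := mu h) m m, pow_two]
  have I6 : ∫ p, U p ∂((mu h).prod (mu h)) = h * c := by
    rw [integral_prod _ (BM.of_cont (by fun_prop)).integrable]
    simp only [hm1]
    rw [integral_const_mul]
  have I7 : ∫ p, m p.1 ∂((mu h).prod (mu h)) = h * c := by
    have := integral_prod_mul (μ := mu h) (ν := mu h) (fun x => m x) (fun _ => (1:ℝ))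
    simp only [mul_one] at this
    rw [this, one, mul_comm]
  have I8 : ∫ p, m p.2 ∂((mu h).prod (mu h)) = h * c := by
    have := integral_prod_mul (μ := mu h) (ν := mu h) (fun _ => (1:ℝ)) (fun x => m x)
    simp only [one_mul] at this
    rw [this, one]
  have I9 : ∫ _, (1:ℝ) ∂((mu h).prod (mu h)) = h ^ 2 := by
    have := integral_prod_mul (μ := mu h) (ν := mu h) (fun _ => (1:ℝ)) (fun _ => (1:ℝ))
    simp only [one_mul] at this
    rw [this, one, pow_two]
  have quad : ∀ α β e : ℝ, ∫ p, (U p + α * m p.1 + β * m p.2 + e) ^ 2 ∂((mu h).prod (mu h)) =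
      (∫ p, U p ^ 2 ∂((mu h).prod (mu h))) + (α ^ 2 + β ^ 2 + 2 * α + 2 * β) * (h * M)
      + e ^ 2 * h ^ 2 + (2 * e + 2 * α * e + 2 * β * e) * (h * c) + 2 * α * β * c ^ 2 := by
    intro α β e
    have e1 : ∀ p : ℝ × ℝ, (U p + α * m p.1 + β * m p.2 + e) ^ 2 =
      U p ^ 2 + α ^ 2 * m p.1 ^ 2 + β ^ 2 * m p.2 ^ 2 + e ^ 2 * 1 +
      (2 * α) * (U p * m p.1) + (2 * β) * (U p * m p.2) + (2 * e) * U p +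
      (2 * α * β) * (m p.1 * m p.2) + (2 * α * e) * m p.1 + (2 * β * e) * m p.2 := by
      intro p; ring
    simp_rw [e1]
    rw [integral_add, integral_add, integral_add, integral_add, integral_add, integral_add,
      integral_add, integral_add, integral_add]
    · simp only [integral_const_mul, I1, I2, I3, I4, I5, I6, I7, I8, I9]
      ring
    all_goals exact (BM.of_cont (by fun_prop)).integrable
  set K : ℝ × ℝ → ℝ := fun p => U p + m p.1 - m p.2 with hK
  have hKc : Continuous K := by fun_prop
  set Φ : ℝ × ℝ → ℝ := fun p => ∫ s in (0:ℝ)..p.1, K (s, p.2) with hΦ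
  have hΦc : Continuous Φ := by
    exact intervalIntegral.continuous_parametric_intervalIntegral_of_continuous
      (f := fun (p : ℝ × ℝ) s => K (s, p.2)) (by simp only [Function.uncurry_def]; fun_prop)
      continuous_fst
  have hΦd : ∀ y x, HasDerivAt (fun x => Φ (x, y)) (K (x, y)) x := by
    intro y x
    have hc : Continuous (fun s => K (s, y)) := by fun_prop
    exact intervalIntegral.integral_hasDerivAt_right (hc.intervalIntegrable _ _)
      (hc.stronglyMeasurableAtFilter _ _) hc.continuousAt
  have hΦ0 : ∀ y, Φ (0, y) = 0 := by intro y; simp [hΦ]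
  have int1 : ∀ f : ℝ → ℝ, Continuous f → Integrable f (mu h) := fun f hf =>
    (intervalIntegrable_iff_integrableOn_Ioc_of_le hh.le).1 (hf.intervalIntegrable 0 h)
  have hΦh : ∀ y, Φ (h, y) = c := by
    intro y
    simp only [hΦ]
    rw [ii_mu hh]
    simp only [hK]
    rw [integral_sub, integral_add, hm2]
    · have : ∫ _, m y ∂(mu h) = h * m y := by
        rw [← ii_mu hh]; simp
      rw [this]; ring
    all_goals exact int1 _ (by fun_prop)
  have bG := hG
  have bU : BM h U := BM.of_cont hU
  have bK : BM h K := BM.of_cont hKc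
  have bΦ : BM h Φ := BM.of_cont hΦc
  -- integration by parts
  have A : ∫ p, (G p * Φ p + U p * K p) ∂((mu h).prod (mu h)) = 0 := by
    have bb := (bG.mul bΦ).add (bU.mul bK)
    rw [integral_prod_symm _ bb.integrable]
    have : ∫ y, (∫ x, (G (x, y) * Φ (x, y) + U (x, y) * K (x, y)) ∂(mu h)) ∂(mu h) =
        ∫ y, U (h, y) * c ∂(mu h) := by
      apply integral_congr_ae
      filter_upwards [ae_mu h] with y hy
      rw [← ii_mu hh]
      have := integral_eq_of_hasDerivAt_off_countable_of_le (fun x => U (x, y) * Φ (x, y))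
        (fun x => G (x, y) * Φ (x, y) + U (x, y) * K (x, y)) hh.le
        (s := {y}) (Set.countable_singleton y) (by fun_prop)
        (fun x hx => (hd y x (by simpa using hx.2)).mul (hΦd y x)) (bb.slice hh hy)
      rw [this]
      simp [hΦ0, hΦh]
    rw [this, integral_mul_const, ← ii_mu hh, hmean, zero_mul]
  rw [integral_add (bG.mul bΦ).integrable (bU.mul bK).integrable] at A
  have B : ∫ p, U p * K p ∂((mu h).prod (mu h)) = ∫ p, U p ^ 2 ∂((mu h).prod (mu h)) := by
    have e1 : ∀ p : ℝ × ℝ, U p * K p = U p ^ 2 + U p * m p.1 - U p * m p.2 := by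
      intro p; simp only [hK]; ring
    simp_rw [e1]
    rw [integral_sub, integral_add, I1, I2]
    · ring
    all_goals exact (BM.of_cont (by fun_prop)).integrable
  have D := quad 1 (-1) 0
  have D' : ∫ p, K p ^ 2 ∂((mu h).prod (mu h)) =
      ∫ p, (U p + 1 * m p.1 + (-1) * m p.2 + 0) ^ 2 ∂((mu h).prod (mu h)) := by
    congr 1; ext p; simp only [hK]; ring
  have E := quad (-1) (-1) (c / h)
  have E0 : 0 ≤ ∫ p, (U p + (-1) * m p.1 + (-1) * m p.2 + c / h) ^ 2 ∂((mu h).prod (mu h)) :=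
    integral_nonneg fun p => sq_nonneg _
  have C : (z / h) ^ 2 * ∫ p, Φ p ^ 2 ∂((mu h).prod (mu h)) ≤
      (∫ p, K p ^ 2 ∂((mu h).prod (mu h))) + c ^ 2 := by
    rw [integral_prod_symm _ bΦ.sq.integrable, integral_prod_symm _ bK.sq.integrable,
      ← integral_const_mul]
    have : c ^ 2 = ∫ _, c ^ 2 / h ∂(mu h) := by
      rw [← ii_mu hh]; simp; field_simp
    rw [this, ← integral_add]
    · apply integral_mono
      · exact (bΦ.sq.integrable.integral_prod_right).const_mul _
      · exact (bK.sq.integrable.integral_prod_right).add (integrable_const _)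
      · intro y
        have := robin_ineq hh hz hcot (fun x => Φ (x, y)) (fun x => K (x, y)) (by fun_prop)
          (hΦd y) (hΦ0 y)
        simpa only [ii_mu hh, hΦh] using this
    · exact (bK.sq.integrable.integral_prod_right)
    · exact integrable_const _
  set l := (z / h) ^ 2 with hl
  have hl0 : 0 < l := by have := hz.1; positivity
  have F : 0 ≤ ∫ p, (G p + l / 2 * Φ p) ^ 2 ∂((mu h).prod (mu h)) :=
    integral_nonneg fun p => sq_nonneg _
  have F' : ∫ p, (G p + l / 2 * Φ p) ^ 2 ∂((mu h).prod (mu h)) =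
      (∫ p, G p ^ 2 ∂((mu h).prod (mu h))) + l * (∫ p, G p * Φ p ∂((mu h).prod (mu h)))
      + l ^ 2 / 4 * (∫ p, Φ p ^ 2 ∂((mu h).prod (mu h))) := by
    have e1 : ∀ p : ℝ × ℝ, (G p + l / 2 * Φ p) ^ 2 =
      G p ^ 2 + l * (G p * Φ p) + l ^ 2 / 4 * Φ p ^ 2 := by
      intro p; ring
    simp_rw [e1]
    rw [integral_add, integral_add, integral_const_mul, integral_const_mul]
    · exact bG.sq.integrable
    · exact (bG.mul bΦ).integrable.const_mul _
    · exact bG.sq.integrable.add ((bG.mul bΦ).integrable.const_mul _)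
    · exact bΦ.sq.integrable.const_mul _
  rw [E] at E0
  rw [D', D] at C
  have E1 : (c / h) ^ 2 * h ^ 2 = c ^ 2 := by field_simp
  have E2 : (c / h) * (h * c) = c ^ 2 := by field_simp
  clear_value l
  generalize (∫ p, U p ^ 2 ∂((mu h).prod (mu h))) = IU at *
  generalize (∫ p, G p ^ 2 ∂((mu h).prod (mu h))) = IG at *
  generalize (∫ p, Φ p ^ 2 ∂((mu h).prod (mu h))) = IP at *
  generalize (∫ p, G p * Φ p ∂((mu h).prod (mu h))) = IX at *
  have E3 : 2 * (h * M) - c ^ 2 ≤ IU := by linear_combination E0 + E1 - 2 * E2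
  have C3 : l * IP ≤ 2 * IU := by linear_combination C + E3
  have X : IX = - IU := by linarith
  rw [F', X] at F
  have C4 := mul_le_mul_of_nonneg_left C3 hl0.le
  linear_combination 2 * F + C4 / 2

lemma odd_square {h : ℝ} (hh : 0 < h) {k : ℝ} (hk : 0 < k) (hkh : k * h < π / 2)
    (U G : ℝ × ℝ → ℝ) (hU : Continuous U) (hG : BM h G)
    (hd : ∀ y x, x ≠ y → HasDerivAt (fun x => U (x, y)) (G (x, y)) x)
    (h0 : ∀ y ∈ Set.Icc 0 h, U (0, y) = 0) :
    k ^ 2 * ∫ p, U p ^ 2 ∂((mu h).prod (mu h)) ≤ ∫ p, G p ^ 2 ∂((mu h).prod (mu h)) := by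
  have bU : BM h U := BM.of_cont hU
  rw [integral_prod_symm _ bU.sq.integrable, integral_prod_symm _ hG.sq.integrable,
      ← integral_const_mul]
  apply integral_mono_ae
  · exact (bU.sq.integrable.integral_prod_right).const_mul _
  · exact (hG.sq.integrable.integral_prod_right)
  filter_upwards [ae_mu h] with y hy
  have e : k * h + (π / 2 - k * h) = π / 2 := by ring
  have := riccati_ineq hh (fun x => U (x, y)) (fun x => G (x, y)) y (by fun_prop) (hd y)
    (hG.slice hh hy) (hG.sq.slice hh hy) (h0 y hy) hk (δ := π / 2 - k * h) (by linarith)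
    (by rw [e]; linarith [pi_pos])
  rw [e] at this
  simpa [ii_mu hh] using this

/-- the half triangle -/
def TT (h : ℝ) : Set (ℝ × ℝ) := {p | 0 < p.2 ∧ p.2 < p.1 ∧ p.1 < h}

lemma meas_TT (h : ℝ) : MeasurableSet (TT h) := by
  apply IsOpen.measurableSet
  unfold TT
  exact (isOpen_lt continuous_const continuous_snd).inter
    ((isOpen_lt continuous_snd continuous_fst).inter (isOpen_lt continuous_fst continuous_const))

lemma TT_sub (h : ℝ) : TT h ⊆ Set.Ioc 0 h ×ˢ Set.Ioc 0 h := by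
  rintro ⟨x, y⟩ ⟨h1, h2, h3⟩
  simp only at h1 h2 h3
  exact ⟨⟨by simp only; linarith, by simp only; linarith⟩,
    ⟨by simp only; linarith, by simp only; linarith⟩⟩

lemma int_TT {h : ℝ} {F : ℝ × ℝ → ℝ} (hF : BM h F) : IntegrableOn F (TT h) := by
  have := hF.integrable
  rw [prod_mu] at this
  exact IntegrableOn.mono_set this (TT_sub h)

lemma null_N (h : ℝ) : (volume : Measure (ℝ × ℝ)) {p | p.1 = p.2 ∨ p.1 = h ∨ p.2 = h} = 0 := by
  have hm : MeasurableSet {p : ℝ × ℝ | p.1 = p.2 ∨ p.1 = h ∨ p.2 = h} := by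
    apply IsClosed.measurableSet
    exact (isClosed_eq continuous_fst continuous_snd).union
      ((isClosed_eq continuous_fst continuous_const).union
        (isClosed_eq continuous_snd continuous_const))
  rw [Measure.volume_eq_prod, Measure.measure_prod_null hm]
  have : ∀ᵐ x : ℝ, x ∈ ({h} : Set ℝ)ᶜ := by
    exact compl_mem_ae_iff.2 (by simp)
  filter_upwards [this] with x hx
  have hx' : x ≠ h := by simpa using hx
  apply measure_mono_null (t := {x, h})
  · rintro y (h1 | h1 | h1)
    · left; exact h1.symm
    · exact absurd h1 hx'
    · right; exact h1
  · exact (Set.toFinite _).measure_zero _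

lemma sq_tri {h : ℝ} {H : ℝ × ℝ → ℝ} (hH : BM h H) :
    ∫ p, H p ∂((mu h).prod (mu h)) = ∫ p in TT h, (H p + H p.swap) := by
  have hI := hH.integrable
  rw [prod_mu] at hI ⊢
  have hdisj : Disjoint (TT h) (Prod.swap ⁻¹' TT h) := by
    rw [Set.disjoint_left]
    rintro ⟨x, y⟩ ⟨h1, h2, h3⟩ ⟨h4, h5, h6⟩
    simp at *
    linarith
  have hsw : MeasurableSet (Prod.swap ⁻¹' TT h) := measurable_swap (meas_TT h)
  have hsub2 : Prod.swap ⁻¹' TT h ⊆ Set.Ioc 0 h ×ˢ Set.Ioc 0 h := by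
    rintro ⟨x, y⟩ hp
    have := TT_sub h hp
    exact ⟨this.2, this.1⟩
  have hae : (Set.Ioc 0 h ×ˢ Set.Ioc 0 h : Set (ℝ × ℝ)) =ᵐ[volume]
      (TT h ∪ Prod.swap ⁻¹' TT h : Set (ℝ × ℝ)) := by
    have : ∀ᵐ p : ℝ × ℝ, ¬ (p.1 = p.2 ∨ p.1 = h ∨ p.2 = h) := by
      rw [ae_iff]; simpa only [not_not] using null_N h
    filter_upwards [this] with p hp
    apply propext
    constructor
    · rintro ⟨h1, h2⟩
      push Not at hp
      rcases lt_or_gt_of_ne hp.1 with h3 | h3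
      · right
        exact ⟨h1.1, h3, lt_of_le_of_ne h2.2 hp.2.2⟩
      · left
        exact ⟨h2.1, h3, lt_of_le_of_ne h1.2 hp.2.1⟩
    · rintro (h1 | h1)
      · exact TT_sub h h1
      · exact hsub2 h1
  rw [setIntegral_congr_set hae, setIntegral_union hdisj hsw (IntegrableOn.mono_set hI (TT_sub h))
    (IntegrableOn.mono_set hI hsub2)]
  have hmp : MeasurePreserving (Prod.swap : ℝ × ℝ → ℝ × ℝ) volume volume :=
    Measure.measurePreserving_swap
  have hemb : MeasurableEmbedding (Prod.swap : ℝ × ℝ → ℝ × ℝ) :=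
    MeasurableEquiv.prodComm.measurableEmbedding
  have e2 := hmp.setIntegral_preimage_emb hemb (fun p => H p.swap) (TT h)
  simp only [Prod.swap_swap] at e2
  rw [e2, ← integral_add (IntegrableOn.mono_set hI (TT_sub h))]
  have := (hmp.integrableOn_comp_preimage hemb (f := fun p => H p.swap) (s := TT h)).1
  apply this
  have e3 : ((fun p => H p.swap) ∘ Prod.swap : ℝ × ℝ → ℝ) = H := by ext p; simp
  rw [e3]
  exact IntegrableOn.mono_set hI hsub2

/-- symmetrised function -/
noncomputable def symU (u : ℝ × ℝ → ℝ) : ℝ × ℝ → ℝ := fun p => u (max p.1 p.2, min p.1 p.2)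

/-- its first partial derivative -/
noncomputable def symG (a b : ℝ × ℝ → ℝ) : ℝ × ℝ → ℝ :=
  fun p => if p.1 < p.2 then b p.swap else a p

lemma symU_cont {u : ℝ × ℝ → ℝ} (hu : Continuous u) : Continuous (symU u) := by
  unfold symU; fun_prop

lemma symG_BM {h : ℝ} {a b : ℝ × ℝ → ℝ} (ha : Continuous a) (hb : Continuous b) :
    BM h (symG a b) := by
  obtain ⟨ma, A, hA⟩ := BM.of_cont (h := h) ha
  obtain ⟨mb, B, hB⟩ := BM.of_cont (h := h) hb
  refine ⟨Measurable.ite (measurableSet_lt measurable_fst measurable_snd)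
    (mb.comp measurable_swap) ma, max A B, ?_⟩
  intro x hx y hy
  simp only [symG]
  split_ifs
  · exact (hB y hy x hx).trans (le_max_right _ _)
  · exact (hA x hx y hy).trans (le_max_left _ _)

lemma symG_deriv {u a b : ℝ × ℝ → ℝ}
    (hua : ∀ x y, HasDerivAt (fun x => u (x, y)) (a (x, y)) x)
    (hub : ∀ x y, HasDerivAt (fun y => u (x, y)) (b (x, y)) y) :
    ∀ y x, x ≠ y → HasDerivAt (fun x => symU u (x, y)) (symG a b (x, y)) x := by
  intro y x hxy
  rcases lt_or_gt_of_ne hxy with hl | hl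
  · have e : symG a b (x, y) = b (y, x) := by simp [symG, hl]
    rw [e]
    refine (hub y x).congr_of_eventuallyEq ?_
    filter_upwards [Iio_mem_nhds hl] with s hs
    have hs' : s ≤ y := le_of_lt hs
    simp [symU, hs']
  · have e : symG a b (x, y) = a (x, y) := by simp [symG, hl.le]
    rw [e]
    refine (hua x y).congr_of_eventuallyEq ?_
    filter_upwards [Ioi_mem_nhds hl] with s hs
    have hs' : y ≤ s := le_of_lt hs
    simp [symU, hs']

lemma symU_int {h : ℝ} {u : ℝ × ℝ → ℝ} (hu : Continuous u) :
    ∫ p, symU u p ^ 2 ∂((mu h).prod (mu h)) = 2 * ∫ p in TT h, u p ^ 2 := by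
  rw [sq_tri (BM.of_cont (symU_cont hu)).sq, ← integral_const_mul]
  apply setIntegral_congr_fun (meas_TT h)
  rintro ⟨x, y⟩ ⟨_, h2, _⟩
  have h2' : y ≤ x := h2.le
  simp [symU, h2']
  ring

lemma symG_int {h : ℝ} {a b : ℝ × ℝ → ℝ} (ha : Continuous a) (hb : Continuous b) :
    ∫ p, symG a b p ^ 2 ∂((mu h).prod (mu h)) = ∫ p in TT h, (a p ^ 2 + b p ^ 2) := by
  rw [sq_tri (symG_BM ha hb).sq]
  apply setIntegral_congr_fun (meas_TT h)
  rintro ⟨x, y⟩ ⟨_, h2, _⟩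
  have h2' : y < x := h2
  simp [symG, h2', h2'.le]

lemma tri_even {h : ℝ} (hh : 0 < h) {z : ℝ} (hz : z ∈ Set.Ioo 0 π)
    (hcot : z * cot z + 1 = 0) {u a b : ℝ × ℝ → ℝ} (hu : Continuous u)
    (ha : Continuous a) (hb : Continuous b)
    (hua : ∀ x y, HasDerivAt (fun x => u (x, y)) (a (x, y)) x)
    (hub : ∀ x y, HasDerivAt (fun y => u (x, y)) (b (x, y)) y)
    (hmean : ∫ y in (0:ℝ)..h, u (h, y) = 0) :
    (z / h) ^ 2 * ∫ p in TT h, u p ^ 2 ≤ ∫ p in TT h, (a p ^ 2 + b p ^ 2) := by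
  have := even_square hh hz hcot (symU u) (symG a b) (symU_cont hu)
    (fun x y => by simp [symU, max_comm, min_comm]) (symG_BM ha hb) (symG_deriv hua hub)
    (by
      refine Eq.trans ?_ hmean
      apply intervalIntegral.integral_congr
      intro y hy
      rw [Set.uIcc_of_le hh.le] at hy
      simp [symU, hy.2])
  rw [symU_int hu, symG_int ha hb] at this
  linarith

lemma z_bound {z : ℝ} (hz : z ∈ Set.Ioo 0 π) (hcot : z * cot z + 1 = 0) : z < 2 * π / 3 := by
  by_contra hcon
  push Not at hcon
  have hs : 0 < sin z := sin_pos_of_pos_of_lt_pi hz.1 hz.2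
  rw [Real.cot_eq_cos_div_sin] at hcot
  have h1 : z * cos z + sin z = 0 := by
    field_simp at hcot
    linarith
  have h2 : cos z ≤ cos (2 * π / 3) :=
    cos_le_cos_of_nonneg_of_le_pi (by positivity) hz.2.le hcon
  have h3 : cos (2 * π / 3) = - (1 / 2) := by
    have : 2 * π / 3 = π - π / 3 := by ring
    rw [this, cos_pi_sub, cos_pi_div_three]
  have h4 := sin_le_one z
  have h5 := pi_gt_three
  nlinarith [hz.1]

lemma tri_odd {h : ℝ} (hh : 0 < h) {z : ℝ} (hz : z ∈ Set.Ioo 0 π)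
    (hcot : z * cot z + 1 = 0) {u a b : ℝ × ℝ → ℝ} (hu : Continuous u)
    (ha : Continuous a) (hb : Continuous b)
    (hua : ∀ x y, HasDerivAt (fun x => u (x, y)) (a (x, y)) x)
    (hub : ∀ x y, HasDerivAt (fun y => u (x, y)) (b (x, y)) y)
    (h0 : ∀ x, u (x, 0) = 0) :
    (z / h) ^ 2 * ∫ p in TT h, u p ^ 2 ≤ ∫ p in TT h, (a p ^ 2 + b p ^ 2) := by
  have hz0 := hz.1
  have hb1 := z_bound hz hcot
  have := odd_square hh (k := 3 / 4 * z / h) (by positivity)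
    (by
      have : 3 / 4 * z / h * h = 3 / 4 * z := by field_simp
      rw [this]; linarith) (symU u) (symG a b) (symU_cont hu)
    (symG_BM ha hb) (symG_deriv hua hub)
    (by
      intro y hy
      simp [symU, hy.1, h0])
  rw [symU_int hu, symG_int ha hb] at this
  have h1 : (3 / 4 * z / h) ^ 2 = 9 / 16 * (z / h) ^ 2 := by ring
  rw [h1] at this
  have h2 : 0 ≤ (z / h) ^ 2 * ∫ p in TT h, u p ^ 2 :=
    mul_nonneg (sq_nonneg _) (integral_nonneg fun p => sq_nonneg _)
  linarith

/-- coordinates embedding -/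
noncomputable def emb (p : ℝ × ℝ) : EuclideanSpace ℝ (Fin 2) := !₂[p.1, p.2]

lemma emb_eq (p : ℝ × ℝ) : emb p =
    p.1 • EuclideanSpace.single (0 : Fin 2) (1:ℝ) + p.2 • EuclideanSpace.single (1 : Fin 2) (1:ℝ) := by
  ext i
  fin_cases i <;> simp [emb]

lemma emb_cont : Continuous emb := by
  have : emb = fun p : ℝ × ℝ =>
    p.1 • EuclideanSpace.single (0 : Fin 2) (1:ℝ) + p.2 • EuclideanSpace.single (1 : Fin 2) (1:ℝ) :=
    funext emb_eq
  rw [this]; fun_prop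

lemma int_Omega {h : ℝ} (F : EuclideanSpace ℝ (Fin 2) → ℝ) (hF : Continuous F) :
    ∫ x in {x : EuclideanSpace ℝ (Fin 2) | 0 < |x 1| ∧ |x 1| < x 0 ∧ x 0 < h}, F x =
      ∫ p in TT h, (F (emb p) + F (emb (p.1, -p.2))) := by
  have hFe : Continuous (fun p => F (emb p)) := hF.comp emb_cont
  set e : EuclideanSpace ℝ (Fin 2) → ℝ × ℝ :=
    (MeasurableEquiv.finTwoArrow : (Fin 2 → ℝ) ≃ᵐ ℝ × ℝ) ∘ (MeasurableEquiv.toLp 2 (Fin 2 → ℝ)).symm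
    with he
  have hmp : MeasurePreserving e volume volume :=
    (volume_preserving_finTwoArrow ℝ).comp
      (EuclideanSpace.volume_preserving_symm_measurableEquiv_toLp (Fin 2))
  have hemb : MeasurableEmbedding e :=
    (MeasurableEquiv.measurableEmbedding _).comp (MeasurableEquiv.measurableEmbedding _)
  have he1 : ∀ x, e x = (x 0, x 1) := fun x => rfl
  have hee : ∀ x, emb (e x) = x := by
    intro x; rw [he1]; ext i; fin_cases i <;> simp [emb]
  set r : ℝ × ℝ → ℝ × ℝ := fun p => (p.1, -p.2) with hr
  have hrm : MeasurePreserving r volume volume :=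
    (MeasurePreserving.id (volume : Measure ℝ)).prod (Measure.measurePreserving_neg volume)
  have hremb : MeasurableEmbedding r :=
    MeasurableEmbedding.prodMap MeasurableEmbedding.id
      (MeasurableEquiv.neg ℝ).measurableEmbedding
  have hrr : ∀ p, r (r p) = p := by intro p; simp [hr]
  have s1 := hmp.setIntegral_preimage_emb hemb (fun p => F (emb p)) (TT h ∪ r ⁻¹' TT h)
  simp only [hee] at s1
  have s2 : e ⁻¹' (TT h ∪ r ⁻¹' TT h) =
      {x : EuclideanSpace ℝ (Fin 2) | 0 < |x 1| ∧ |x 1| < x 0 ∧ x 0 < h} := by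
    ext x
    simp only [Set.mem_preimage, Set.mem_union, he1, hr, TT, Set.mem_ofPred_eq]
    constructor
    · rintro (⟨h1, h2, h3⟩ | ⟨h1, h2, h3⟩)
      · rw [abs_of_pos h1]; exact ⟨h1, h2, h3⟩
      · rw [abs_of_neg (by linarith)]; exact ⟨h1, h2, h3⟩
    · rintro ⟨h1, h2, h3⟩
      rcases le_or_gt (x 1) 0 with h4 | h4
      · right; rw [abs_of_nonpos h4] at h1 h2; exact ⟨h1, h2, h3⟩
      · left; rw [abs_of_pos h4] at h1 h2; exact ⟨h1, h2, h3⟩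
  rw [s2] at s1
  rw [s1]
  have i1 : IntegrableOn (fun p => F (emb p)) (TT h) := int_TT (BM.of_cont hFe)
  have i2 : IntegrableOn (fun p => F (emb (r p))) (TT h) :=
    int_TT (BM.of_cont (hFe.comp (by fun_prop : Continuous r)))
  have hdisj : Disjoint (TT h) (r ⁻¹' TT h) := by
    rw [Set.disjoint_left]
    rintro ⟨x, y⟩ ⟨h1, h2, h3⟩ ⟨h4, h5, h6⟩
    simp only [hr] at *
    linarith
  have i3 : IntegrableOn (fun p => F (emb p)) (r ⁻¹' TT h) := by
    have := (hrm.integrableOn_comp_preimage hremb (f := fun p => F (emb (r p))) (s := TT h)).2 i2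
    simpa only [Function.comp_def, hrr] using this
  rw [setIntegral_union hdisj (hrm.measurable (meas_TT h)) i1 i3]
  have s3 := hrm.setIntegral_preimage_emb hremb (fun p => F (emb (r p))) (TT h)
  simp only [hrr] at s3
  rw [s3, ← integral_add i1 i2]

lemma norm_grad (w : EuclideanSpace ℝ (Fin 2) → ℝ) (x : EuclideanSpace ℝ (Fin 2)) :
    ‖gradient w x‖ ^ 2 = (fderiv ℝ w x (EuclideanSpace.single 0 1)) ^ 2 +
      (fderiv ℝ w x (EuclideanSpace.single 1 1)) ^ 2 := by
  have : ∀ i : Fin 2, gradient w x i = fderiv ℝ w x (EuclideanSpace.single i 1) := by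
    intro i
    have h1 : inner ℝ (gradient w x) (EuclideanSpace.single i (1:ℝ)) =
        fderiv ℝ w x (EuclideanSpace.single i 1) := by
      unfold gradient
      rw [InnerProductSpace.toDual_symm_apply]
    rw [← h1, EuclideanSpace.inner_single_right]
    simp
  rw [EuclideanSpace.norm_sq_eq]
  simp [Fin.sum_univ_two, this]

lemma main_ineq {h : ℝ} (hh : 0 < h) {z : ℝ} (hz : z ∈ Set.Ioo 0 π)
    (hcot : z * cot z + 1 = 0) (w : EuclideanSpace ℝ (Fin 2) → ℝ) (hw : ContDiff ℝ 1 w)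
    (hmean : (∫ t in (-h)..h, w !₂[h, t]) = 0) :
    (z / h) ^ 2 * (∫ x in {x : EuclideanSpace ℝ (Fin 2) |
            0 < |x 1| ∧ |x 1| < x 0 ∧ x 0 < h}, (w x) ^ 2) ≤
       (∫ x in {x : EuclideanSpace ℝ (Fin 2) |
            0 < |x 1| ∧ |x 1| < x 0 ∧ x 0 < h}, ‖gradient w x‖ ^ 2) := by
  have hfd : Continuous (fderiv ℝ w) := hw.continuous_fderiv one_ne_zero
  have hwc : Continuous w := hw.continuous
  simp_rw [norm_grad]
  rw [int_Omega _ (by fun_prop), int_Omega _ (by fun_prop)]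
  set u : ℝ × ℝ → ℝ := fun p => w (emb p) with hu
  set a : ℝ × ℝ → ℝ := fun p => fderiv ℝ w (emb p) (EuclideanSpace.single 0 1) with ha
  set b : ℝ × ℝ → ℝ := fun p => fderiv ℝ w (emb p) (EuclideanSpace.single 1 1) with hb
  have hec := emb_cont
  have huc : Continuous u := by fun_prop
  have hac : Continuous a := by fun_prop
  have hbc : Continuous b := by fun_prop
  have hwd : ∀ x, HasFDerivAt w (fderiv ℝ w x) x := fun x =>
    (hw.differentiable one_ne_zero x).hasFDerivAt
  have hua : ∀ x y, HasDerivAt (fun x => u (x, y)) (a (x, y)) x := by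
    intro x y
    have h1 : HasDerivAt (fun x => emb (x, y)) (EuclideanSpace.single (0 : Fin 2) (1:ℝ)) x := by
      simp_rw [emb_eq]
      simpa using ((hasDerivAt_id x).smul_const (EuclideanSpace.single (0 : Fin 2) (1:ℝ))).add_const
        (y • EuclideanSpace.single (1 : Fin 2) (1:ℝ))
    exact (hwd (emb (x, y))).comp_hasDerivAt x h1
  have hub : ∀ x y, HasDerivAt (fun y => u (x, y)) (b (x, y)) y := by
    intro x y
    have h1 : HasDerivAt (fun y => emb (x, y)) (EuclideanSpace.single (1 : Fin 2) (1:ℝ)) y := by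
      simp_rw [emb_eq]
      simpa using ((hasDerivAt_id y).smul_const (EuclideanSpace.single (1 : Fin 2) (1:ℝ))).const_add
        (x • EuclideanSpace.single (0 : Fin 2) (1:ℝ))
    exact (hwd (emb (x, y))).comp_hasDerivAt y h1
  have hub' : ∀ x y, HasDerivAt (fun y => u (x, -y)) (-b (x, -y)) y := by
    intro x y
    have := (hub x (-y)).comp y (hasDerivAt_neg y)
    simpa [Function.comp_def] using this
  have ev := tri_even hh hz hcot (u := fun p => (u p + u (p.1, -p.2)) / 2)
    (a := fun p => (a p + a (p.1, -p.2)) / 2) (b := fun p => (b p - b (p.1, -p.2)) / 2)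
    (by fun_prop) (by fun_prop) (by fun_prop)
    (fun x y => ((hua x y).add (hua x (-y))).div_const 2)
    (fun x y => by simpa [sub_eq_add_neg] using ((hub x y).add (hub' x y)).div_const 2)
    (by
      have hc : Continuous (fun t => u (h, t)) := by fun_prop
      have hc' : Continuous (fun t => u (h, -t)) := by fun_prop
      rw [intervalIntegral.integral_div, intervalIntegral.integral_add
        (hc.intervalIntegrable _ _) (hc'.intervalIntegrable _ _),
        intervalIntegral.integral_comp_neg (fun t => u (h, t)), add_comm, neg_zero,
        intervalIntegral.integral_add_adjacent_intervals
        (hc.intervalIntegrable _ _) (hc.intervalIntegrable _ _)]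
      have : ∫ t in (-h)..h, u (h, t) = 0 := hmean
      rw [this, zero_div])
  have od := tri_odd hh hz hcot (u := fun p => (u p - u (p.1, -p.2)) / 2)
    (a := fun p => (a p - a (p.1, -p.2)) / 2) (b := fun p => (b p + b (p.1, -p.2)) / 2)
    (by fun_prop) (by fun_prop) (by fun_prop)
    (fun x y => ((hua x y).sub (hua x (-y))).div_const 2)
    (fun x y => by simpa using ((hub x y).sub (hub' x y)).div_const 2)
    (fun x => by simp)
  have c1 : ∀ F : ℝ × ℝ → ℝ, Continuous F → IntegrableOn F (TT h) := fun F hF =>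
    int_TT (BM.of_cont hF)
  have e1 : ∫ p in TT h, (u p ^ 2 + u (p.1, -p.2) ^ 2) =
      2 * ((∫ p in TT h, ((u p + u (p.1, -p.2)) / 2) ^ 2) +
        ∫ p in TT h, ((u p - u (p.1, -p.2)) / 2) ^ 2) := by
    rw [← integral_add (c1 _ (by fun_prop)) (c1 _ (by fun_prop)), ← integral_const_mul]
    congr 1; ext p; ring
  have e2 : ∫ p in TT h, (a p ^ 2 + b p ^ 2 + (a (p.1, -p.2) ^ 2 + b (p.1, -p.2) ^ 2)) =
      2 * ((∫ p in TT h, (((a p + a (p.1, -p.2)) / 2) ^ 2 + ((b p - b (p.1, -p.2)) / 2) ^ 2)) +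
        ∫ p in TT h, (((a p - a (p.1, -p.2)) / 2) ^ 2 + ((b p + b (p.1, -p.2)) / 2) ^ 2)) := by
    rw [← integral_add (c1 _ (by fun_prop)) (c1 _ (by fun_prop)), ← integral_const_mul]
    congr 1; ext p; ring
  rw [e1, e2]
  linarith

lemma cos_sq_sub {k h : ℝ} (hk : 0 < k) :
    (∫ x in (0:ℝ)..h, cos (k * x) ^ 2) - (∫ x in (0:ℝ)..h, sin (k * x) ^ 2) =
      sin (k * h) * cos (k * h) / k := by
  have i1 : IntervalIntegrable (fun x => cos (k * x) ^ 2) volume 0 h :=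
    Continuous.intervalIntegrable (by fun_prop) _ _
  have i2 : IntervalIntegrable (fun x => sin (k * x) ^ 2) volume 0 h :=
    Continuous.intervalIntegrable (by fun_prop) _ _
  rw [← intervalIntegral.integral_sub i1 i2]
  have hd : ∀ x ∈ Set.uIcc 0 h, HasDerivAt (fun x => sin (k * x) * cos (k * x) / k)
      (cos (k * x) ^ 2 - sin (k * x) ^ 2) x := by
    intro x _
    have h1 : HasDerivAt (fun x => k * x) k x := by
      simpa using ((hasDerivAt_id x).const_mul k)
    refine HasDerivAt.congr_deriv ((h1.sin.mul h1.cos).div_const k) ?_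
    field_simp
    ring
  rw [intervalIntegral.integral_eq_sub_of_hasDerivAt hd (i1.sub i2)]
  simp

lemma cos_int {k h : ℝ} (hk : 0 < k) :
    (∫ x in (0:ℝ)..h, cos (k * x)) = sin (k * h) / k := by
  have hd : ∀ x ∈ Set.uIcc 0 h, HasDerivAt (fun x => sin (k * x) / k) (cos (k * x)) x := by
    intro x _
    have h1 : HasDerivAt (fun x => k * x) k x := by
      simpa using ((hasDerivAt_id x).const_mul k)
    refine HasDerivAt.congr_deriv (h1.sin.div_const k) ?_
    field_simp
  rw [intervalIntegral.integral_eq_sub_of_hasDerivAt hd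
    (Continuous.intervalIntegrable (by fun_prop) _ _)]
  simp

lemma sharp {h : ℝ} (hh : 0 < h) {z : ℝ} (hz : z ∈ Set.Ioo 0 π)
    (hcot : z * cot z + 1 = 0) : ∃ w : EuclideanSpace ℝ (Fin 2) → ℝ, ContDiff ℝ 1 w ∧
    (∫ t in (-h)..h, w !₂[h, t]) = 0 ∧
    0 < (∫ x in {x : EuclideanSpace ℝ (Fin 2) |
            0 < |x 1| ∧ |x 1| < x 0 ∧ x 0 < h}, (w x) ^ 2) ∧
    (∫ x in {x : EuclideanSpace ℝ (Fin 2) |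
            0 < |x 1| ∧ |x 1| < x 0 ∧ x 0 < h}, ‖gradient w x‖ ^ 2) =
    (z / h) ^ 2 * (∫ x in {x : EuclideanSpace ℝ (Fin 2) |
            0 < |x 1| ∧ |x 1| < x 0 ∧ x 0 < h}, (w x) ^ 2) := by
  have hz0 := hz.1
  have hs : 0 < sin z := sin_pos_of_pos_of_lt_pi hz.1 hz.2
  have h1 : z * cos z + sin z = 0 := by
    rw [Real.cot_eq_cos_div_sin] at hcot
    field_simp at hcot
    linarith
  set k := z / h with hk
  have hk0 : 0 < k := by positivity
  have hkh : k * h = z := by rw [hk]; field_simp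
  set w : EuclideanSpace ℝ (Fin 2) → ℝ := fun x => cos (k * x 0) + cos (k * x 1) with hw
  have hwd : ∀ x, HasFDerivAt w ((-(k * sin (k * x 0))) • (EuclideanSpace.proj (0 : Fin 2) :
      EuclideanSpace ℝ (Fin 2) →L[ℝ] ℝ) + (-(k * sin (k * x 1))) •
      (EuclideanSpace.proj (1 : Fin 2) : EuclideanSpace ℝ (Fin 2) →L[ℝ] ℝ)) x := by
    intro x
    have p : ∀ i : Fin 2, HasFDerivAt (fun x : EuclideanSpace ℝ (Fin 2) => cos (k * x i))
        ((-(k * sin (k * x i))) • (EuclideanSpace.proj i :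
      EuclideanSpace ℝ (Fin 2) →L[ℝ] ℝ)) x := by
      intro i
      have h2 : HasFDerivAt (fun x : EuclideanSpace ℝ (Fin 2) => x i) (EuclideanSpace.proj i :
        EuclideanSpace ℝ (Fin 2) →L[ℝ] ℝ) x :=
        (EuclideanSpace.proj i : EuclideanSpace ℝ (Fin 2) →L[ℝ] ℝ).hasFDerivAt
      have h3 := (h2.const_mul k).cos
      refine HasFDerivAt.congr_fderiv h3 ?_
      rw [smul_smul]
      congr 1; ring
    exact (p 0).add (p 1)
  have hwc : ContDiff ℝ 1 w := by
    have hp : ∀ i : Fin 2, ContDiff ℝ 1 (fun x : EuclideanSpace ℝ (Fin 2) => x i) := fun i =>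
      (EuclideanSpace.proj i : EuclideanSpace ℝ (Fin 2) →L[ℝ] ℝ).contDiff
    exact ((contDiff_const.mul (hp 0)).cos).add ((contDiff_const.mul (hp 1)).cos)
  have hwcont := hwc.continuous
  have hgrad : ∀ x, ‖gradient w x‖ ^ 2 = k ^ 2 * (sin (k * x 0) ^ 2 + sin (k * x 1) ^ 2) := by
    intro x
    rw [norm_grad, (hwd x).fderiv]
    simp
    ring
  -- one-dimensional quantities
  set A := ∫ x, cos (k * x) ^ 2 ∂(mu h) with hA
  set B := ∫ x, sin (k * x) ^ 2 ∂(mu h) with hB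
  have hS : ∫ x, cos (k * x) ∂(mu h) = sin z / k := by
    rw [← ii_mu hh, cos_int hk0, hkh]
  have hAB : A - B = sin z * cos z / k := by
    rw [hA, hB, ← ii_mu hh, ← ii_mu hh, cos_sq_sub hk0, hkh]
  have hA0 : 0 ≤ A := integral_nonneg fun x => sq_nonneg _
  have one : ∫ _, (1:ℝ) ∂(mu h) = h := by
    rw [← ii_mu hh]; simp
  have P1 : ∀ f : ℝ → ℝ, ∫ p, f p.1 ∂((mu h).prod (mu h)) = h * ∫ x, f x ∂(mu h) := by
    intro f
    have := integral_prod_mul (μ := mu h) (ν := mu h) f (fun _ => (1:ℝ))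
    simp only [mul_one] at this
    rw [this, one, mul_comm]
  have P2 : ∀ f : ℝ → ℝ, ∫ p, f p.2 ∂((mu h).prod (mu h)) = h * ∫ x, f x ∂(mu h) := by
    intro f
    have := integral_prod_mul (μ := mu h) (ν := mu h) (fun _ => (1:ℝ)) f
    simp only [one_mul] at this
    rw [this, one]
  have V1 : (∫ x in {x : EuclideanSpace ℝ (Fin 2) |
            0 < |x 1| ∧ |x 1| < x 0 ∧ x 0 < h}, (w x) ^ 2) = 2 * h * A + 2 * (sin z / k) ^ 2 := by
    rw [int_Omega _ (by fun_prop)]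
    have e1 : ∫ p in TT h, (w (emb p) ^ 2 + w (emb (p.1, -p.2)) ^ 2) =
        ∫ p, (cos (k * p.1) + cos (k * p.2)) ^ 2 ∂((mu h).prod (mu h)) := by
      rw [sq_tri (BM.of_cont (by fun_prop))]
      congr 1; ext p
      simp [hw, emb]
      ring
    rw [e1]
    have e2 : ∀ p : ℝ × ℝ, (cos (k * p.1) + cos (k * p.2)) ^ 2 =
      cos (k * p.1) ^ 2 + cos (k * p.2) ^ 2 + 2 * (cos (k * p.1) * cos (k * p.2)) := by
      intro p; ring
    simp_rw [e2]
    rw [integral_add, integral_add, P1 (fun x => cos (k * x) ^ 2), P2 (fun x => cos (k * x) ^ 2),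
      integral_const_mul,
      integral_prod_mul (μ := mu h) (ν := mu h) (fun x => cos (k * x)) (fun x => cos (k * x)), hS]
    · ring
    all_goals exact (BM.of_cont (by fun_prop)).integrable
  have V2 : (∫ x in {x : EuclideanSpace ℝ (Fin 2) |
            0 < |x 1| ∧ |x 1| < x 0 ∧ x 0 < h}, ‖gradient w x‖ ^ 2) = k ^ 2 * (2 * h * B) := by
    simp_rw [hgrad]
    rw [int_Omega _ (by fun_prop)]
    have e1 : ∫ p in TT h, (k ^ 2 * (sin (k * emb p 0) ^ 2 + sin (k * emb p 1) ^ 2) +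
        k ^ 2 * (sin (k * emb (p.1, -p.2) 0) ^ 2 + sin (k * emb (p.1, -p.2) 1) ^ 2)) =
        ∫ p, k ^ 2 * (sin (k * p.1) ^ 2 + sin (k * p.2) ^ 2) ∂((mu h).prod (mu h)) := by
      rw [sq_tri (BM.of_cont (by fun_prop))]
      congr 1; ext p
      simp only [emb, Prod.swap, PiLp.toLp_apply, Matrix.cons_val_zero, Matrix.cons_val_one,
        mul_neg, sin_neg, neg_sq]
      ring
    rw [e1, integral_const_mul, integral_add, P1 (fun x => sin (k * x) ^ 2),
      P2 (fun x => sin (k * x) ^ 2)]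
    · ring
    all_goals exact (BM.of_cont (by fun_prop)).integrable
  refine ⟨w, hwc, ?_, ?_, ?_⟩
  · have e1 : ∀ t, w !₂[h, t] = cos (k * h) + cos (k * t) := by intro t; simp [hw]
    simp_rw [e1]
    have hc : Continuous (fun t => cos (k * h) + cos (k * t)) := by fun_prop
    rw [← intervalIntegral.integral_add_adjacent_intervals
        (hc.intervalIntegrable (-h) 0) (hc.intervalIntegrable 0 h)]
    have e2 := intervalIntegral.integral_comp_neg (a := 0) (b := h)
      (fun t => cos (k * h) + cos (k * t))
    simp only [mul_neg, cos_neg, neg_zero] at e2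
    rw [← e2, intervalIntegral.integral_add (Continuous.intervalIntegrable (by fun_prop) _ _)
      (Continuous.intervalIntegrable (by fun_prop) _ _), cos_int hk0, hkh]
    simp
    have : h = z / k := by rw [← hkh]; field_simp
    rw [this]
    field_simp
    linarith
  · rw [V1]; positivity
  · rw [V1, V2]
    have e : B = A - sin z * cos z / k := by linarith
    have e2 : h = z / k := by rw [← hkh]; field_simp
    rw [e]
    congr 1
    have e3 : 2 * h * (sin z * cos z / k) = - (2 * (sin z / k) ^ 2) := by
      rw [e2]
      field_simp
      linear_combination h1
    linear_combination -e3


/-- The sharp constant `C₁(Ω,Γ)` in `‖w‖_{L²(Ω)} ≤ C₁ ‖∇w‖_{L²(Ω)}` for functions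
with zero mean trace on `Γ`, where `Ω = {0 < |x₂| < x₁ < h}` is an isosceles right
triangle (with hypotenuse of length `2h`) and `Γ = {x₁ = h, x₂ ∈ [−h,h]}` is the
hypotenuse, equals `h/z̃₀`, where `z̃₀` is the unique root of `z·cot z + 1 = 0`
in `(0,π)`. -/
theorem triangle_hypotenuse_C1 (h : ℝ) (hh : 0 < h) (z₀ : ℝ)
    (hz₀ : z₀ ∈ Set.Ioo 0 π ∧ z₀ * Real.cot z₀ + 1 = 0)
    (huniq : ∀ z ∈ Set.Ioo (0:ℝ) π, z * Real.cot z + 1 = 0 → z = z₀) :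
    IsLeast {C : ℝ |
      ∀ w : EuclideanSpace ℝ (Fin 2) → ℝ, ContDiff ℝ 1 w →
        (∫ t in (-h)..h, w !₂[h, t]) = 0 →
        Real.sqrt (∫ x in {x : EuclideanSpace ℝ (Fin 2) |
            0 < |x 1| ∧ |x 1| < x 0 ∧ x 0 < h}, (w x) ^ 2) ≤
          C * Real.sqrt (∫ x in {x : EuclideanSpace ℝ (Fin 2) |
            0 < |x 1| ∧ |x 1| < x 0 ∧ x 0 < h}, ‖gradient w x‖ ^ 2)}
      (h / z₀) := by
  obtain ⟨hz, hcot⟩ := hz₀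
  have hz0 : 0 < z₀ := hz.1
  constructor
  · intro w hw hmean
    have key := main_ineq hh hz hcot w hw hmean
    apply Real.sqrt_le_iff.2
    refine ⟨by positivity, ?_⟩
    rw [mul_pow, Real.sq_sqrt (integral_nonneg fun x => sq_nonneg _)]
    have := mul_le_mul_of_nonneg_left key (sq_nonneg (h / z₀))
    rw [← mul_assoc] at this
    have e : (h / z₀) ^ 2 * (z₀ / h) ^ 2 = 1 := by field_simp
    rwa [e, one_mul] at this
  · intro C hC
    obtain ⟨w, hw, hmean, hpos, heq⟩ := sharp hh hz hcot
    have := hC w hw hmean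
    rw [heq, Real.sqrt_mul (sq_nonneg _), Real.sqrt_sq (by positivity), ← mul_assoc] at this
    have h2 := Real.sqrt_pos.2 hpos
    have h3 : 1 ≤ C * (z₀ / h) := by
      by_contra hcon
      push Not at hcon
      nlinarith
    rw [div_le_iff₀ hz0]
    have h4 := mul_le_mul_of_nonneg_right h3 hh.le
    have e : C * (z₀ / h) * h = C * z₀ := by field_simp
    linarith
end

section
/- Let Ω = {(x₁,x₂) ∈ ℝ² : 0 < |x₂| < x₁ < h} be an isosceles right triangle with hypotenuse of length 2h, and let Γ = {x₁ = h, x₂ ∈ [−h,h]} be the hypotenuse. Then the sharp constant C₂(Ω,Γ) in the inequality ‖w‖_{L²(Γ)} ≤ C₂‖∇w‖_{L²(Ω)} for all w ∈ H̃¹(Ω,Γ) is equal to h^{1/2}. -/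
open MeasureTheory Real

lemma cs1 (g : ℝ → ℝ) (hg : Continuous g) (a b : ℝ) (hab : a ≤ b) :
    (∫ x in a..b, g x) ^ 2 ≤ (b - a) * ∫ x in a..b, (g x) ^ 2 := by
  rcases hab.eq_or_lt with rfl | hlt
  · simp
  set I := ∫ x in a..b, g x with hI
  have h0 : 0 ≤ ∫ x in a..b, ((b - a) * g x - I) ^ 2 :=
    intervalIntegral.integral_nonneg hab (fun x _ => sq_nonneg _)
  have h1 : ∫ x in a..b, ((b - a) * g x - I) ^ 2
      = (b - a) ^ 2 * (∫ x in a..b, (g x) ^ 2) - 2 * (b - a) * I * I + (b - a) * I ^ 2 := by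
    have : ∀ x, ((b - a) * g x - I) ^ 2
        = (b - a) ^ 2 * (g x) ^ 2 - 2 * (b - a) * I * g x + I ^ 2 := fun x => by ring
    simp_rw [this]
    rw [intervalIntegral.integral_add, intervalIntegral.integral_sub,
      intervalIntegral.integral_const_mul, intervalIntegral.integral_const_mul,
      intervalIntegral.integral_const, ← hI, smul_eq_mul]
    all_goals exact Continuous.intervalIntegrable (by fun_prop) _ _
  rw [h1] at h0
  have hpos : 0 < b - a := by linarith
  have : 0 ≤ (b - a) * ((b - a) * (∫ x in a..b, (g x) ^ 2) - I ^ 2) := by nlinarith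
  have := nonneg_of_mul_nonneg_right this hpos
  linarith

lemma cs2 (f g : ℝ → ℝ) (hf : ∀ x, HasDerivAt f (g x) x) (hg : Continuous g) (a b : ℝ)
    (hab : a ≤ b) : (f b - f a) ^ 2 ≤ (b - a) * ∫ x in a..b, (g x) ^ 2 := by
  rw [← intervalIntegral.integral_eq_sub_of_hasDerivAt (fun x _ => hf x)
    (hg.intervalIntegrable _ _)]
  exact cs1 g hg a b hab

lemma cs3 (α β k l X Y : ℝ) (hk : 0 ≤ k) (hl : 0 ≤ l) (hX : 0 ≤ X) (hY : 0 ≤ Y)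
    (h1 : α ^ 2 ≤ k * X) (h2 : β ^ 2 ≤ l * Y) : (α + β) ^ 2 ≤ (k + l) * (X + Y) := by
  have h3 : (2 * α * β) ^ 2 ≤ (k * Y + l * X) ^ 2 := by
    have : α ^ 2 * β ^ 2 ≤ (k * X) * (l * Y) := mul_le_mul h1 h2 (sq_nonneg _) (by positivity)
    nlinarith [sq_nonneg (k * Y - l * X)]
  have h4 := abs_le_of_sq_le_sq h3 (by positivity)
  nlinarith [le_abs_self (2 * α * β)]

noncomputable def RR (h : ℝ) (ux uy : ℝ → ℝ → ℝ) (t : ℝ) : ℝ :=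
  (∫ x in t..h, (ux x t) ^ 2) + ∫ y in (0:ℝ)..t, (uy t y) ^ 2

lemma RR_cont (h : ℝ) (ux uy : ℝ → ℝ → ℝ) (cx : Continuous (Function.uncurry ux))
    (cy : Continuous (Function.uncurry uy)) : Continuous (RR h ux uy) := by
  unfold RR
  apply Continuous.add
  · have : ∀ t, (∫ x in t..h, (ux x t) ^ 2) = - ∫ x in h..t, (ux x t) ^ 2 := fun t =>
      intervalIntegral.integral_symm _ _
    simp_rw [this]
    apply Continuous.neg
    apply intervalIntegral.continuous_parametric_intervalIntegral_of_continuous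
      (f := fun t x => (ux x t) ^ 2) _ continuous_id
    have : Continuous fun p : ℝ × ℝ => Function.uncurry ux (p.2, p.1) := by fun_prop
    exact this.pow 2
  · apply intervalIntegral.continuous_parametric_intervalIntegral_of_continuous
      (f := fun t y => (uy t y) ^ 2) _ continuous_id
    exact cy.pow 2

lemma path (h : ℝ) (u ux uy : ℝ → ℝ → ℝ)
    (dx : ∀ x y, HasDerivAt (fun x => u x y) (ux x y) x)
    (dy : ∀ x y, HasDerivAt (fun y => u x y) (uy x y) y)
    (cx : Continuous (Function.uncurry ux)) (cy : Continuous (Function.uncurry uy))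
    (s t : ℝ) (hs : 0 ≤ s) (hst : s ≤ t) (hth : t ≤ h) :
    (u h t - u t s) ^ 2 ≤ (h - s) * RR h ux uy t := by
  have cx' : Continuous fun x => ux x t := by
    have : Continuous fun x => Function.uncurry ux (x, t) := by fun_prop
    exact this
  have cy' : Continuous fun y => uy t y := by
    have : Continuous fun y => Function.uncurry uy (t, y) := by fun_prop
    exact this
  have h1 := cs2 _ _ (fun x => dx x t) cx' t h hth
  have h2 := cs2 _ _ (fun y => dy t y) cy' s t hst
  have h3 : (∫ y in s..t, (uy t y) ^ 2) ≤ ∫ y in (0:ℝ)..t, (uy t y) ^ 2 := by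
    apply intervalIntegral.integral_mono_interval hs hst le_rfl
    · exact Filter.Eventually.of_forall (fun y => sq_nonneg _)
    · exact (cy'.pow 2).intervalIntegrable _ _
  have h4 := cs3 _ _ _ _ _ _ (by linarith) (by linarith)
    (intervalIntegral.integral_nonneg hth (fun x _ => sq_nonneg _))
    (intervalIntegral.integral_nonneg hst (fun x _ => sq_nonneg _)) h1 h2
  unfold RR
  calc _ = (u h t - u t t + (u t t - u t s)) ^ 2 := by ring
    _ ≤ _ := h4
    _ = (h - s) * ((∫ x in t..h, (ux x t) ^ 2) + ∫ y in s..t, (uy t y) ^ 2) := by ring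
    _ ≤ _ := by gcongr; linarith

lemma pair0 (h : ℝ) (u ux uy : ℝ → ℝ → ℝ)
    (dx : ∀ x y, HasDerivAt (fun x => u x y) (ux x y) x)
    (dy : ∀ x y, HasDerivAt (fun y => u x y) (uy x y) y)
    (cx : Continuous (Function.uncurry ux)) (cy : Continuous (Function.uncurry uy))
    (s t : ℝ) (hs : 0 ≤ s) (hst : s ≤ t) (hth : t ≤ h) :
    (u h t - u h s) ^ 2 ≤ 2 * (h - s) * RR h ux uy t + 2 * (h - t) * RR h ux uy s := by
  have h1 := path h u ux uy dx dy cx cy s t hs hst hth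
  have cx' : Continuous fun x => ux x s := by
    have : Continuous fun x => Function.uncurry ux (x, s) := by fun_prop
    exact this
  have h2 := cs2 _ _ (fun x => dx x s) cx' t h hth
  have h3 : (∫ x in t..h, (ux x s) ^ 2) ≤ RR h ux uy s := by
    unfold RR
    have a1 : (∫ x in t..h, (ux x s) ^ 2) ≤ (∫ x in s..h, (ux x s) ^ 2) := by
      apply intervalIntegral.integral_mono_interval hst hth le_rfl
      · exact Filter.Eventually.of_forall (fun y => sq_nonneg _)
      · exact (cx'.pow 2).intervalIntegrable _ _
    have a2 : 0 ≤ ∫ y in (0:ℝ)..s, (uy s y) ^ 2 :=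
      intervalIntegral.integral_nonneg hs (fun x _ => sq_nonneg _)
    linarith
  have h4 : (h - t) * (∫ x in t..h, (ux x s) ^ 2) ≤ (h - t) * RR h ux uy s :=
    mul_le_mul_of_nonneg_left h3 (by linarith)
  nlinarith [sq_nonneg ((u h t - u t s) + (u h s - u t s))]

lemma pair (h : ℝ) (u ux uy : ℝ → ℝ → ℝ)
    (dx : ∀ x y, HasDerivAt (fun x => u x y) (ux x y) x)
    (dy : ∀ x y, HasDerivAt (fun y => u x y) (uy x y) y)
    (cx : Continuous (Function.uncurry ux)) (cy : Continuous (Function.uncurry uy))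
    (s t : ℝ) (hs : 0 ≤ s) (hsh : s ≤ h) (ht : 0 ≤ t) (hth : t ≤ h) :
    (u h t - u h s) ^ 2 ≤ 2 * (h - s) * RR h ux uy t + 2 * (h - t) * RR h ux uy s := by
  rcases le_total s t with hst | hst
  · exact pair0 h u ux uy dx dy cx cy s t hs hst hth
  · have := pair0 h u ux uy dx dy cx cy t s ht hst hsh
    nlinarith

lemma even_part (h : ℝ) (hh : 0 < h) (u ux uy : ℝ → ℝ → ℝ)
    (dx : ∀ x y, HasDerivAt (fun x => u x y) (ux x y) x)
    (dy : ∀ x y, HasDerivAt (fun y => u x y) (uy x y) y)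
    (cx : Continuous (Function.uncurry ux)) (cy : Continuous (Function.uncurry uy))
    (hz : ∫ t in (0:ℝ)..h, u h t = 0) :
    ∫ t in (0:ℝ)..h, (u h t) ^ 2 ≤ h * ∫ t in (0:ℝ)..h, RR h ux uy t := by
  have cR := RR_cont h ux uy cx cy
  set R := RR h ux uy
  have ce : Continuous (fun t => u h t) :=
    continuous_iff_continuousAt.2 (fun t => (dy h t).continuousAt)
  set A := ∫ t in (0:ℝ)..h, (u h t) ^ 2 with hA
  set B := ∫ t in (0:ℝ)..h, R t with hB
  -- integrate in s
  have key : ∀ t ∈ Set.Icc (0:ℝ) h, h * (u h t) ^ 2 + A ≤ h ^ 2 * R t + 2 * (h - t) * B := by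
    intro t ht
    have m := intervalIntegral.integral_mono_on (μ := volume) (a := 0) (b := h)
      (f := fun s => (u h t - u h s) ^ 2)
      (g := fun s => 2 * (h - s) * R t + 2 * (h - t) * R s) hh.le
      (Continuous.intervalIntegrable (by fun_prop) _ _)
      (Continuous.intervalIntegrable (by fun_prop) _ _)
      (fun s hs => pair h u ux uy dx dy cx cy s t hs.1 hs.2 ht.1 ht.2)
    have e1 : ∫ s in (0:ℝ)..h, (u h t - u h s) ^ 2 = h * (u h t) ^ 2 + A := by
      have : ∀ s, (u h t - u h s) ^ 2 = (u h t) ^ 2 - 2 * u h t * u h s + (u h s) ^ 2 :=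
        fun s => by ring
      simp_rw [this]
      rw [intervalIntegral.integral_add, intervalIntegral.integral_sub,
        intervalIntegral.integral_const_mul, intervalIntegral.integral_const, hz, smul_eq_mul]
      · ring
      all_goals exact Continuous.intervalIntegrable (by fun_prop) _ _
    have e2 : ∫ s in (0:ℝ)..h, (2 * (h - s) * R t + 2 * (h - t) * R s)
        = h ^ 2 * R t + 2 * (h - t) * B := by
      rw [intervalIntegral.integral_add, intervalIntegral.integral_const_mul,
        intervalIntegral.integral_mul_const, intervalIntegral.integral_const_mul,
        intervalIntegral.integral_sub, integral_id, intervalIntegral.integral_const, smul_eq_mul]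
      · ring
      all_goals exact Continuous.intervalIntegrable (by fun_prop) _ _
    rw [e1, e2] at m
    exact m
  have m := intervalIntegral.integral_mono_on (μ := volume) (a := 0) (b := h)
      (f := fun t => h * (u h t) ^ 2 + A)
      (g := fun t => h ^ 2 * R t + 2 * (h - t) * B) hh.le
      (Continuous.intervalIntegrable (by fun_prop) _ _)
      (Continuous.intervalIntegrable (by fun_prop) _ _) key
  have e1 : ∫ t in (0:ℝ)..h, (h * (u h t) ^ 2 + A) = 2 * h * A := by
    rw [intervalIntegral.integral_add, intervalIntegral.integral_const_mul,
      intervalIntegral.integral_const, smul_eq_mul]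
    · ring
    all_goals exact Continuous.intervalIntegrable (by fun_prop) _ _
  have e2 : ∫ t in (0:ℝ)..h, (h ^ 2 * R t + 2 * (h - t) * B) = 2 * h * (h * B) := by
    rw [intervalIntegral.integral_add, intervalIntegral.integral_const_mul,
      intervalIntegral.integral_mul_const, intervalIntegral.integral_const_mul,
      intervalIntegral.integral_sub, integral_id, intervalIntegral.integral_const, smul_eq_mul]
    · ring
    all_goals exact Continuous.intervalIntegrable (by fun_prop) _ _
  rw [e1, e2] at m
  exact le_of_mul_le_mul_left m (by positivity)

lemma odd_part (h : ℝ) (hh : 0 < h) (u ux uy : ℝ → ℝ → ℝ)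
    (dx : ∀ x y, HasDerivAt (fun x => u x y) (ux x y) x)
    (dy : ∀ x y, HasDerivAt (fun y => u x y) (uy x y) y)
    (cx : Continuous (Function.uncurry ux)) (cy : Continuous (Function.uncurry uy))
    (hz : ∀ x, u x 0 = 0) :
    ∫ t in (0:ℝ)..h, (u h t) ^ 2 ≤ h * ∫ t in (0:ℝ)..h, RR h ux uy t := by
  have cR := RR_cont h ux uy cx cy
  have ce : Continuous (fun t => u h t) :=
    continuous_iff_continuousAt.2 (fun t => (dy h t).continuousAt)
  rw [← intervalIntegral.integral_const_mul]
  apply intervalIntegral.integral_mono_on hh.le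
  · exact Continuous.intervalIntegrable (by fun_prop) _ _
  · exact Continuous.intervalIntegrable (by fun_prop) _ _
  intro t ht
  simpa [hz] using path h u ux uy dx dy cx cy 0 t le_rfl ht.1 ht.2

lemma split_sym (a : ℝ) (f : ℝ → ℝ) (hf : Continuous f) :
    ∫ t in (-a)..a, f t = ∫ t in (0:ℝ)..a, (f t + f (-t)) := by
  rw [intervalIntegral.integral_add (hf.intervalIntegrable _ _)
    (Continuous.intervalIntegrable (by fun_prop) _ _), intervalIntegral.integral_comp_neg (f := f),
    ← intervalIntegral.integral_add_adjacent_intervals (b := 0)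
      (hf.intervalIntegrable _ _) (hf.intervalIntegrable _ _), neg_zero, add_comm]

/-- combined inequality -/
lemma combined (h : ℝ) (hh : 0 < h) (u ux uy : ℝ → ℝ → ℝ)
    (dx : ∀ x y, HasDerivAt (fun x => u x y) (ux x y) x)
    (dy : ∀ x y, HasDerivAt (fun y => u x y) (uy x y) y)
    (cx : Continuous (Function.uncurry ux)) (cy : Continuous (Function.uncurry uy))
    (hz : ∫ t in (-h)..h, u h t = 0) :
    ∫ t in (-h)..h, (u h t) ^ 2 ≤ h * ∫ t in (0:ℝ)..h,
      ((∫ x in t..h, ((ux x t) ^ 2 + (ux x (-t)) ^ 2))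
        + ∫ y in (0:ℝ)..t, ((uy t y) ^ 2 + (uy t (-y)) ^ 2)) := by
  have ce : Continuous (fun t => u h t) :=
    continuous_iff_continuousAt.2 (fun t => (dy h t).continuousAt)
  have dy' : ∀ x y, HasDerivAt (fun y => u x (-y)) (- uy x (-y)) y := fun x y => by
    have := (dy x (-y)).scomp y (hasDerivAt_neg y)
    simp only [smul_eq_mul, neg_mul, one_mul] at this
    exact this
  have cx' : Continuous (fun p : ℝ × ℝ => Function.uncurry ux (p.1, -p.2)) := by fun_prop
  have cy' : Continuous (fun p : ℝ × ℝ => Function.uncurry uy (p.1, -p.2)) := by fun_prop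
  have cex : Continuous (Function.uncurry fun x y => (ux x y + ux x (-y)) / 2) :=
    (cx.add cx').div_const 2
  have cox : Continuous (Function.uncurry fun x y => (ux x y - ux x (-y)) / 2) :=
    (cx.sub cx').div_const 2
  have cey : Continuous (Function.uncurry fun x y => (uy x y + -uy x (-y)) / 2) :=
    (cy.add cy'.neg).div_const 2
  have coy : Continuous (Function.uncurry fun x y => (uy x y - -uy x (-y)) / 2) :=
    (cy.sub cy'.neg).div_const 2
  have E := even_part h hh (fun x y => (u x y + u x (-y)) / 2)
    (fun x y => (ux x y + ux x (-y)) / 2) (fun x y => (uy x y + - uy x (-y)) / 2)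
    (fun x y => ((dx x y).add (dx x (-y))).div_const 2)
    (fun x y => ((dy x y).add (dy' x y)).div_const 2)
    cex cey
    (by rw [intervalIntegral.integral_div, ← split_sym h _ ce, hz, zero_div])
  have O := odd_part h hh (fun x y => (u x y - u x (-y)) / 2)
    (fun x y => (ux x y - ux x (-y)) / 2) (fun x y => (uy x y - - uy x (-y)) / 2)
    (fun x y => ((dx x y).sub (dx x (-y))).div_const 2)
    (fun x y => ((dy x y).sub (dy' x y)).div_const 2)
    cox coy (by simp)
  have cR1 := RR_cont h _ _ cex cey
  have cR2 := RR_cont h _ _ cox coy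
  have key : ∀ t, (∫ x in t..h, ((ux x t) ^ 2 + (ux x (-t)) ^ 2))
        + (∫ y in (0:ℝ)..t, ((uy t y) ^ 2 + (uy t (-y)) ^ 2))
      = 2 * (RR h (fun x y => (ux x y + ux x (-y)) / 2) (fun x y => (uy x y + - uy x (-y)) / 2) t
      + RR h (fun x y => (ux x y - ux x (-y)) / 2) (fun x y => (uy x y - - uy x (-y)) / 2) t) := by
    intro t
    have c1 : Continuous fun x => ux x t := cx.comp (by fun_prop : Continuous fun x => (x, t))
    have c2 : Continuous fun x => ux x (-t) := cx.comp (by fun_prop : Continuous fun x => (x, -t))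
    have c3 : Continuous fun y => uy t y := cy.comp (by fun_prop : Continuous fun y => (t, y))
    have c4 : Continuous fun y => uy t (-y) := c3.comp continuous_neg
    unfold RR
    have e1 : (∫ x in t..h, ((ux x t) ^ 2 + (ux x (-t)) ^ 2)) =
        2 * ((∫ x in t..h, ((ux x t + ux x (-t)) / 2) ^ 2)
          + ∫ x in t..h, ((ux x t - ux x (-t)) / 2) ^ 2) := by
      rw [← intervalIntegral.integral_add, ← intervalIntegral.integral_const_mul]
      · congr 1; ext x; ring
      all_goals exact Continuous.intervalIntegrable (by fun_prop) _ _
    have e2 : (∫ y in (0:ℝ)..t, ((uy t y) ^ 2 + (uy t (-y)) ^ 2)) =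
        2 * ((∫ y in (0:ℝ)..t, ((uy t y + -uy t (-y)) / 2) ^ 2)
          + ∫ y in (0:ℝ)..t, ((uy t y - -uy t (-y)) / 2) ^ 2) := by
      rw [← intervalIntegral.integral_add, ← intervalIntegral.integral_const_mul]
      · congr 1; ext x; ring
      all_goals exact Continuous.intervalIntegrable (by fun_prop) _ _
    rw [e1, e2]; ring
  simp_rw [key]
  rw [intervalIntegral.integral_const_mul, intervalIntegral.integral_add
    (cR1.intervalIntegrable _ _) (cR2.intervalIntegrable _ _),
    split_sym h (fun t => (u h t) ^ 2) (ce.pow 2)]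
  have e3 : ∫ t in (0:ℝ)..h, ((u h t) ^ 2 + (u h (-t)) ^ 2)
      = 2 * ((∫ t in (0:ℝ)..h, ((u h t + u h (-t)) / 2) ^ 2)
        + ∫ t in (0:ℝ)..h, ((u h t - u h (-t)) / 2) ^ 2) := by
    rw [← intervalIntegral.integral_add, ← intervalIntegral.integral_const_mul]
    · congr 1; ext x; ring
    all_goals exact Continuous.intervalIntegrable (by fun_prop) _ _
  rw [e3]
  linarith

def SS (h : ℝ) : Set (ℝ × ℝ) := {p | 0 < |p.2| ∧ |p.2| < p.1 ∧ p.1 < h}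

lemma SS_meas (h : ℝ) : MeasurableSet (SS h) := by
  unfold SS
  apply IsOpen.measurableSet
  have h1 : IsOpen {p : ℝ × ℝ | 0 < |p.2|} := isOpen_lt (by fun_prop) (by fun_prop)
  have h2 : IsOpen {p : ℝ × ℝ | |p.2| < p.1} := isOpen_lt (by fun_prop) (by fun_prop)
  have h3 : IsOpen {p : ℝ × ℝ | p.1 < h} := isOpen_lt (by fun_prop) (by fun_prop)
  exact h1.inter (h2.inter h3)

lemma SS_int (h : ℝ) (f : ℝ × ℝ → ℝ) (hf : Continuous f) : IntegrableOn f (SS h) := by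
  have : IntegrableOn f (Set.Icc 0 h ×ˢ Set.Icc (-h) h) :=
    hf.continuousOn.integrableOn_compact (isCompact_Icc.prod isCompact_Icc)
  apply this.mono_set
  rintro ⟨x, y⟩ ⟨h1, h2, h3⟩
  simp only at h1 h2 h3
  have := abs_le.1 (h2.le.trans h3.le)
  exact ⟨⟨by simp only; linarith, h3.le⟩, this⟩

lemma fub_x (h : ℝ) (hh : 0 < h) (f : ℝ × ℝ → ℝ) (hf : Continuous f) :
    ∫ p in SS h, f p = ∫ x in (0:ℝ)..h, ∫ y in (0:ℝ)..x, (f (x, y) + f (x, -y)) := by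
  have hi := SS_int h f hf
  rw [← integral_indicator (SS_meas h), Measure.volume_eq_prod, integral_prod _
    (by rw [← Measure.volume_eq_prod]; exact (integrable_indicator_iff (SS_meas h)).2 hi),
    intervalIntegral.integral_of_le hh.le, integral_Ioc_eq_integral_Ioo,
    ← integral_indicator measurableSet_Ioo]
  congr 1
  ext x
  by_cases hx : x ∈ Set.Ioo 0 h
  · rw [Set.indicator_of_mem hx, ← split_sym x (fun y => f (x, y)) (by fun_prop),
      intervalIntegral.integral_of_le (by linarith [hx.1]), integral_Ioc_eq_integral_Ioo,
      ← integral_indicator measurableSet_Ioo]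
    apply integral_congr_ae
    have : ∀ᵐ y : ℝ, y ≠ 0 := by simp [ae_iff]
    filter_upwards [this] with y hy
    simp only [Set.indicator, SS, Set.mem_ofPred_eq, abs_pos, Set.mem_Ioo]
    refine if_congr ?_ rfl rfl
    rw [← abs_lt]
    exact ⟨fun a => a.2.1, fun a => ⟨hy, a, hx.2⟩⟩
  · rw [Set.indicator_of_notMem hx]
    apply integral_eq_zero_of_ae
    refine Filter.Eventually.of_forall fun y => ?_
    apply Set.indicator_of_notMem
    rintro ⟨h1, h2, h3⟩
    exact hx ⟨h1.trans h2, h3⟩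

lemma fub_y (h : ℝ) (hh : 0 < h) (f : ℝ × ℝ → ℝ) (hf : Continuous f) :
    ∫ p in SS h, f p = ∫ y in (0:ℝ)..h, ∫ x in y..h, (f (x, y) + f (x, -y)) := by
  have hi := SS_int h f hf
  have hc : Continuous fun y : ℝ => ∫ x in |y|..h, f (x, y) := by
    have : ∀ y, (∫ x in |y|..h, f (x, y)) = - ∫ x in h..|y|, f (x, y) := fun t =>
      intervalIntegral.integral_symm _ _
    simp_rw [this]
    apply Continuous.neg
    apply intervalIntegral.continuous_parametric_intervalIntegral_of_continuous
      (f := fun y x => f (x, y)) _ continuous_abs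
    show Continuous fun p : ℝ × ℝ => f (p.2, p.1)
    fun_prop
  have e : ∫ y in (0:ℝ)..h, ∫ x in y..h, (f (x, y) + f (x, -y))
      = ∫ y in (-h)..h, ∫ x in |y|..h, f (x, y) := by
    rw [split_sym h _ hc]
    apply intervalIntegral.integral_congr
    intro y hy
    rw [Set.uIcc_of_le hh.le] at hy
    simp only [abs_neg, abs_of_nonneg hy.1]
    rw [intervalIntegral.integral_add]
    all_goals exact Continuous.intervalIntegrable (by fun_prop) _ _
  rw [e, ← integral_indicator (SS_meas h), Measure.volume_eq_prod, integral_prod_symm _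
    (by rw [← Measure.volume_eq_prod]; exact (integrable_indicator_iff (SS_meas h)).2 hi),
    intervalIntegral.integral_of_le (by linarith), integral_Ioc_eq_integral_Ioo,
    ← integral_indicator measurableSet_Ioo]
  apply integral_congr_ae
  have : ∀ᵐ y : ℝ, y ≠ 0 := by simp [ae_iff]
  filter_upwards [this] with y hy0
  by_cases hy : y ∈ Set.Ioo (-h) h
  · have hy' := abs_lt.2 hy
    rw [Set.indicator_of_mem hy, intervalIntegral.integral_of_le hy'.le,
      integral_Ioc_eq_integral_Ioo, ← integral_indicator measurableSet_Ioo]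
    congr 1
    ext x
    simp only [Set.indicator, SS, Set.mem_ofPred_eq, abs_pos, Set.mem_Ioo]
    refine if_congr ?_ rfl rfl
    exact ⟨fun a => a.2, fun a => ⟨hy0, a⟩⟩
  · rw [Set.indicator_of_notMem hy]
    apply integral_eq_zero_of_ae
    refine Filter.Eventually.of_forall fun x => ?_
    apply Set.indicator_of_notMem
    rintro ⟨h1, h2, h3⟩
    exact hy (abs_lt.1 (h2.trans h3))

lemma fub_xy (h : ℝ) (hh : 0 < h) (f g : ℝ → ℝ → ℝ) (hf : Continuous (Function.uncurry f))
    (hg : Continuous (Function.uncurry g)) :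
    ∫ p in SS h, (f p.1 p.2 + g p.1 p.2) = ∫ t in (0:ℝ)..h,
      ((∫ x in t..h, (f x t + f x (-t))) + ∫ y in (0:ℝ)..t, (g t y + g t (-y))) := by
  have e : ∫ p in SS h, (f p.1 p.2 + g p.1 p.2) =
      (∫ p in SS h, f p.1 p.2) + ∫ p in SS h, g p.1 p.2 :=
    integral_add (SS_int h _ hf) (SS_int h _ hg)
  rw [e, fub_y h hh (fun p => f p.1 p.2) hf, fub_x h hh (fun p => g p.1 p.2) hg, ← intervalIntegral.integral_add]
  · apply Continuous.intervalIntegrable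
    have : ∀ t, (∫ x in t..h, (f x t + f x (-t))) = - ∫ x in h..t, (f x t + f x (-t)) := fun t =>
      intervalIntegral.integral_symm _ _
    simp_rw [this]
    apply Continuous.neg
    apply intervalIntegral.continuous_parametric_intervalIntegral_of_continuous
      (f := fun t x => f x t + f x (-t)) _ continuous_id
    have : Continuous fun p : ℝ × ℝ => Function.uncurry f (p.2, p.1)
      + Function.uncurry f (p.2, -p.1) := by fun_prop
    exact this
  · apply Continuous.intervalIntegrable
    apply intervalIntegral.continuous_parametric_intervalIntegral_of_continuous
      (f := fun t y => g t y + g t (-y)) _ continuous_id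
    have : Continuous fun p : ℝ × ℝ => Function.uncurry g (p.1, p.2)
      + Function.uncurry g (p.1, -p.2) := by fun_prop
    exact this

lemma transfer (h : ℝ) (F : EuclideanSpace ℝ (Fin 2) → ℝ) :
    ∫ x in {x : EuclideanSpace ℝ (Fin 2) | 0 < |x 1| ∧ |x 1| < x 0 ∧ x 0 < h}, F x
      = ∫ p in SS h, F !₂[p.1, p.2] := by
  have mp := (volume_preserving_finTwoArrow ℝ).comp (PiLp.volume_preserving_ofLp (Fin 2))
  have me : MeasurableEmbedding ((MeasurableEquiv.finTwoArrow (α := ℝ)) ∘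
      (@WithLp.ofLp 2 (Fin 2 → ℝ))) :=
    (MeasurableEquiv.measurableEmbedding _).comp
      (MeasurableEquiv.toLp 2 (Fin 2 → ℝ)).symm.measurableEmbedding
  rw [← mp.setIntegral_preimage_emb me]
  have : ∀ x : EuclideanSpace ℝ (Fin 2), !₂[x 0, x 1] = x := fun x => by
    ext i; fin_cases i <;> simp
  simp [SS, MeasurableEquiv.finTwoArrow, this]

lemma vec_eq (x y : ℝ) : (!₂[x, y] : EuclideanSpace ℝ (Fin 2)) =
    x • EuclideanSpace.single 0 1 + y • EuclideanSpace.single 1 1 := by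
  ext i; fin_cases i <;> simp

lemma energy (h : ℝ) (hh : 0 < h) (w : EuclideanSpace ℝ (Fin 2) → ℝ) (ux uy : ℝ → ℝ → ℝ)
    (hux : ∀ x y, ux x y = fderiv ℝ w !₂[x, y] (EuclideanSpace.single 0 1))
    (huy : ∀ x y, uy x y = fderiv ℝ w !₂[x, y] (EuclideanSpace.single 1 1))
    (cx : Continuous (Function.uncurry ux)) (cy : Continuous (Function.uncurry uy)) :
    ∫ x in {x : EuclideanSpace ℝ (Fin 2) | 0 < |x 1| ∧ |x 1| < x 0 ∧ x 0 < h}, ‖gradient w x‖ ^ 2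
      = ∫ t in (0:ℝ)..h,
      ((∫ x in t..h, ((ux x t) ^ 2 + (ux x (-t)) ^ 2))
        + ∫ y in (0:ℝ)..t, ((uy t y) ^ 2 + (uy t (-y)) ^ 2)) := by
  rw [transfer]
  simp_rw [norm_grad, ← hux, ← huy]
  exact fub_xy h hh (fun x y => (ux x y) ^ 2) (fun x y => (uy x y) ^ 2) (cx.pow 2) (cy.pow 2)

lemma derivs (w : EuclideanSpace ℝ (Fin 2) → ℝ) (hw : ContDiff ℝ 1 w) :
    (∀ x y, HasDerivAt (fun x => w !₂[x, y])
      (fderiv ℝ w !₂[x, y] (EuclideanSpace.single 0 1)) x) ∧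
    (∀ x y, HasDerivAt (fun y => w !₂[x, y])
      (fderiv ℝ w !₂[x, y] (EuclideanSpace.single 1 1)) y) := by
  have hd : ∀ z, HasFDerivAt w (fderiv ℝ w z) z := fun z =>
    ((hw.differentiable one_ne_zero) z).hasFDerivAt
  constructor
  · intro x y
    have h1 : HasDerivAt (fun x : ℝ => (!₂[x, y] : EuclideanSpace ℝ (Fin 2)))
        (EuclideanSpace.single 0 1) x := by
      simp_rw [vec_eq]
      simpa using ((hasDerivAt_id x).smul_const
        (EuclideanSpace.single 0 1 : EuclideanSpace ℝ (Fin 2))).add_const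
        (y • (EuclideanSpace.single 1 1 : EuclideanSpace ℝ (Fin 2)))
    exact (hd _).comp_hasDerivAt x h1
  · intro x y
    have h1 : HasDerivAt (fun y : ℝ => (!₂[x, y] : EuclideanSpace ℝ (Fin 2)))
        (EuclideanSpace.single 1 1) y := by
      simp_rw [vec_eq]
      simpa using ((hasDerivAt_id y).smul_const
        (EuclideanSpace.single 1 1 : EuclideanSpace ℝ (Fin 2))).const_add
        (x • (EuclideanSpace.single 0 1 : EuclideanSpace ℝ (Fin 2)))
    exact (hd _).comp_hasDerivAt y h1

lemma fd_cont (w : EuclideanSpace ℝ (Fin 2) → ℝ) (hw : ContDiff ℝ 1 w)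
    (v : EuclideanSpace ℝ (Fin 2)) :
    Continuous (Function.uncurry fun x y : ℝ => fderiv ℝ w !₂[x, y] v) := by
  have h1 := hw.continuous_fderiv one_ne_zero
  have h2 : Continuous fun p : ℝ × ℝ => (!₂[p.1, p.2] : EuclideanSpace ℝ (Fin 2)) := by
    simp_rw [vec_eq]; fun_prop
  exact (h1.comp h2).clm_apply continuous_const

/-- The sharp constant `C₂(Ω,Γ)` in `‖w‖_{L²(Γ)} ≤ C₂ ‖∇w‖_{L²(Ω)}` for functions
with zero mean trace on `Γ`, where `Ω = {0 < |x₂| < x₁ < h}` is an isosceles right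
triangle (with hypotenuse of length `2h`) and `Γ = {x₁ = h, x₂ ∈ [−h,h]}` is the
hypotenuse, equals `h^(1/2)`. -/
theorem triangle_hypotenuse_C2 (h : ℝ) (hh : 0 < h) :
    IsLeast {C : ℝ |
      ∀ w : EuclideanSpace ℝ (Fin 2) → ℝ, ContDiff ℝ 1 w →
        (∫ t in (-h)..h, w !₂[h, t]) = 0 →
        Real.sqrt (∫ t in (-h)..h, (w !₂[h, t]) ^ 2) ≤
          C * Real.sqrt (∫ x in {x : EuclideanSpace ℝ (Fin 2) |
            0 < |x 1| ∧ |x 1| < x 0 ∧ x 0 < h}, ‖gradient w x‖ ^ 2)}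
      (Real.sqrt h) := by
  constructor
  · intro w hw hz
    have D := derivs w hw
    have C0 := fd_cont w hw (EuclideanSpace.single 0 1)
    have C1 := fd_cont w hw (EuclideanSpace.single 1 1)
    rw [energy h hh w _ _ (fun _ _ => rfl) (fun _ _ => rfl) C0 C1, ← Real.sqrt_mul hh.le]
    exact Real.sqrt_le_sqrt
      (combined h hh (fun x y => w !₂[x, y]) _ _ D.1 D.2 C0 C1 hz)
  · intro C hC
    let w : EuclideanSpace ℝ (Fin 2) → ℝ := fun x => x 0 * x 1
    have hw : ContDiff ℝ 1 w := by
      show ContDiff ℝ 1 fun x : EuclideanSpace ℝ (Fin 2) => x 0 * x 1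
      fun_prop
    have hwv : ∀ x y : ℝ, w !₂[x, y] = x * y := fun x y => by simp [w]
    have D := derivs w hw
    have g0 : ∀ x y : ℝ, fderiv ℝ w !₂[x, y] (EuclideanSpace.single 0 1) = y := fun x y => by
      have h1 := D.1 x y
      simp_rw [hwv] at h1
      have h2 : HasDerivAt (fun x => x * y) y x := by
        simpa using (hasDerivAt_id x).mul_const y
      exact h1.unique h2
    have g1 : ∀ x y : ℝ, fderiv ℝ w !₂[x, y] (EuclideanSpace.single 1 1) = x := fun x y => by
      have h1 := D.2 x y
      simp_rw [hwv] at h1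
      have h2 : HasDerivAt (fun y => x * y) x y := by
        simpa using (hasDerivAt_id y).const_mul x
      exact h1.unique h2
    have key := hC w hw (by simp_rw [hwv]; rw [intervalIntegral.integral_const_mul, integral_id]; ring)
    rw [energy h hh w (fun x y => y) (fun x y => x) (fun x y => (g0 x y).symm)
      (fun x y => (g1 x y).symm) continuous_snd continuous_fst] at key
    have e1 : ∫ t in (-h)..h, (w !₂[h, t]) ^ 2 = h * (2 * h ^ 4 / 3) := by
      simp_rw [hwv, mul_pow]
      rw [intervalIntegral.integral_const_mul, integral_pow]
      norm_num
      ring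
    have e2 : ∫ t in (0:ℝ)..h, ((∫ x in t..h, (t ^ 2 + (-t) ^ 2))
        + ∫ y in (0:ℝ)..t, (t ^ 2 + t ^ 2)) = 2 * h ^ 4 / 3 := by
      have : ∀ t : ℝ, ((∫ x in t..h, (t ^ 2 + (-t) ^ 2))
        + ∫ y in (0:ℝ)..t, (t ^ 2 + t ^ 2)) = 2 * h * t ^ 2 := fun t => by
        rw [intervalIntegral.integral_const, intervalIntegral.integral_const, smul_eq_mul,
          smul_eq_mul]
        ring
      simp_rw [this]
      rw [intervalIntegral.integral_const_mul, integral_pow]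
      norm_num
      ring
    rw [e1, e2, Real.sqrt_mul hh.le] at key
    exact le_of_mul_le_mul_right key (Real.sqrt_pos.2 (by positivity))
end

section
/- For every α > 0, the equation tanh(z/α)·tan(zα) = 1 has a unique root z₀ = z₀(α) in the range determined by 0 < z₀·α < π/2, and this root satisfies z₀(α)·α > π/4. -/
open Real

lemma aux_tanh_lt {a b : ℝ} (h : a < b) : Real.tanh a < Real.tanh b := by
  rw [Real.tanh_eq_sinh_div_cosh, Real.tanh_eq_sinh_div_cosh,
    div_lt_div_iff₀ (Real.cosh_pos a) (Real.cosh_pos b)]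
  have := Real.sinh_pos_iff.2 (sub_pos.2 h)
  rw [Real.sinh_sub] at this
  linarith

lemma aux_mono (α : ℝ) (hα : 0 < α) {x y : ℝ} (hx : 0 < x * α) (hy : y * α < π / 2)
    (h : x < y) : Real.tanh (x / α) * Real.tan (x * α) <
      Real.tanh (y / α) * Real.tan (y * α) := by
  have h1 : x * α < y * α := mul_lt_mul_of_pos_right h hα
  have h2 : x / α < y / α := div_lt_div_of_pos_right h hα
  have hx0 : 0 < x := pos_of_mul_pos_left hx hα.le
  have h3 : 0 < Real.tanh (x / α) := by
    have := aux_tanh_lt (div_pos hx0 hα)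
    simpa using this
  have h4 := Real.tan_lt_tan_of_nonneg_of_lt_pi_div_two hx.le hy h1
  have h5 := Real.tan_pos_of_pos_of_lt_pi_div_two hx (h1.trans hy)
  exact mul_lt_mul'' (aux_tanh_lt h2) h4 h3.le h5.le

/-- For every `α > 0`, the equation `tanh(z/α)·tan(zα) = 1` has a unique root
`z₀ = z₀(α)` in the range determined by `0 < z₀·α < π/2`, and this root satisfies
`z₀·α > π/4`. -/
theorem tanh_tan_eq_one_unique_root (α : ℝ) (hα : 0 < α) :
    (∃! z : ℝ, 0 < z * α ∧ z * α < π / 2 ∧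
        Real.tanh (z / α) * Real.tan (z * α) = 1) ∧
    (∀ z : ℝ, 0 < z * α → z * α < π / 2 →
        Real.tanh (z / α) * Real.tan (z * α) = 1 → π / 4 < z * α) := by
  constructor
  · have hc : Continuous (fun z : ℝ => Real.sinh (z / α) * Real.sin (z * α)
        - Real.cosh (z / α) * Real.cos (z * α)) := by fun_prop
    have hp : 0 < π / 2 / α := by positivity
    have he : π / 2 / α * α = π / 2 := by field_simp
    have hs : 0 < Real.sinh (π / 2 / α / α) := Real.sinh_pos_iff.2 (by positivity)
    obtain ⟨z, ⟨hz0, hz1⟩, hz⟩ := intermediate_value_Ioo hp.le hc.continuousOn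
      (show (0 : ℝ) ∈ Set.Ioo _ _ by
        constructor
        · simp
        · simp only [he, Real.sin_pi_div_two, Real.cos_pi_div_two]; linarith)
    have ha : 0 < z * α := mul_pos hz0 hα
    have hb : z * α < π / 2 := by
      rw [← he]; exact mul_lt_mul_of_pos_right hz1 hα
    refine ⟨z, ⟨ha, hb, ?_⟩, ?_⟩
    · have hcos := Real.cos_pos_of_mem_Ioo ⟨by linarith [Real.pi_pos], hb⟩
      have hch := Real.cosh_pos (z / α)
      rw [Real.tanh_eq_sinh_div_cosh, Real.tan_eq_sin_div_cos, div_mul_div_comm,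
        div_eq_one_iff_eq (by positivity)]
      exact sub_eq_zero.1 hz
    · rintro w ⟨hw0, hw1, hw⟩
      have hcos := Real.cos_pos_of_mem_Ioo ⟨by linarith [Real.pi_pos], hb⟩
      have hch := Real.cosh_pos (z / α)
      have hz' : Real.tanh (z / α) * Real.tan (z * α) = 1 := by
        rw [Real.tanh_eq_sinh_div_cosh, Real.tan_eq_sin_div_cos, div_mul_div_comm,
          div_eq_one_iff_eq (by positivity)]
        exact sub_eq_zero.1 hz
      rcases lt_trichotomy w z with h | h | h
      · have := aux_mono α hα hw0 hb h
        linarith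
      · exact h
      · have := aux_mono α hα ha hw1 h
        linarith
  · intro z h0 h1 h
    by_contra! hle
    have ht : Real.tan (z * α) ≤ 1 := by
      rcases hle.lt_or_eq with hl | hl
      · have := Real.tan_lt_tan_of_nonneg_of_lt_pi_div_two h0.le
          (by linarith [Real.pi_pos] : π / 4 < π / 2) hl
        rw [Real.tan_pi_div_four] at this
        exact this.le
      · rw [hl, Real.tan_pi_div_four]
    have h5 := Real.tan_pos_of_pos_of_lt_pi_div_two h0 h1
    have := Real.tanh_lt_one (z / α)
    nlinarith
end

section
/- For α > 0 let z₀(α) be the unique root of tanh(z/α)·tan(zα) = 1 with 0 < z₀(α)·α < π/2. Then the function α ↦ α·z₀(α)·tanh(z₀(α)/α) is strictly decreasing on (0, +∞); consequently the function f(α) = z₀(α)·tanh(z₀(α)/α) is strictly decreasing on (0, +∞). -/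
open Real

lemma aux_sinc {u v : ℝ} (hu : 0 < u) (huv : u < v) (hv : v < π) :
    u * sin v < v * sin u := by
  have hv0 : 0 < v := hu.trans huv
  have p1 : 0 < 1 - u / v := by rw [sub_pos, div_lt_one hv0]; exact huv
  have p2 : 0 < u / v := by positivity
  have m0 : (0 : ℝ) ∈ Set.Icc 0 π := ⟨le_rfl, pi_pos.le⟩
  have mv : v ∈ Set.Icc 0 π := ⟨hv0.le, hv.le⟩
  have h := strictConcaveOn_sin_Icc.2 m0 mv hv0.ne p1 p2 (by ring)
  simp only [smul_eq_mul, mul_zero, sin_zero, zero_add] at h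
  rw [div_mul_cancel₀ _ hv0.ne', div_mul_eq_mul_div, div_lt_iff₀ hv0] at h
  linarith

lemma aux_cot {x y : ℝ} (hx : 0 < x) (hxy : x < y) (hy : y < π / 2) :
    y / tan y < x / tan x := by
  have h := aux_sinc (u := y - x) (v := x + y) (by linarith) (by linarith) (by linarith)
  rw [sin_add, sin_sub] at h
  have sx : 0 < sin x := sin_pos_of_pos_of_lt_pi hx (by linarith)
  have sy : 0 < sin y := sin_pos_of_pos_of_lt_pi (by linarith) (by linarith)
  rw [tan_eq_sin_div_cos, tan_eq_sin_div_cos, div_div_eq_mul_div, div_div_eq_mul_div,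
    div_lt_div_iff₀ sy sx]
  nlinarith

lemma aux_tanh {x y : ℝ} (h : x < y) : tanh x < tanh y := by
  have h1 : 0 < sinh (y - x) := sinh_pos_iff.2 (by linarith)
  rw [sinh_sub] at h1
  rw [tanh_eq_sinh_div_cosh, tanh_eq_sinh_div_cosh, div_lt_div_iff₀ (cosh_pos x) (cosh_pos y)]
  linarith

theorem z0_tanh_strictAnti (z₀ : ℝ → ℝ)
    (hz₀ : ∀ α : ℝ, 0 < α →
      (0 < z₀ α * α ∧ z₀ α * α < π / 2 ∧
        Real.tanh (z₀ α / α) * Real.tan (z₀ α * α) = 1) ∧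
      (∀ z : ℝ, 0 < z * α → z * α < π / 2 →
        Real.tanh (z / α) * Real.tan (z * α) = 1 → z = z₀ α)) :
    StrictAntiOn (fun α : ℝ => α * z₀ α * Real.tanh (z₀ α / α)) (Set.Ioi 0) ∧
    StrictAntiOn (fun α : ℝ => z₀ α * Real.tanh (z₀ α / α)) (Set.Ioi 0) := by
  have key : StrictAntiOn (fun α : ℝ => α * z₀ α * Real.tanh (z₀ α / α)) (Set.Ioi 0) := by
    intro a ha b hb hab
    simp only [Set.mem_Ioi] at ha hb
    obtain ⟨⟨a1, a2, a3⟩, -⟩ := hz₀ a ha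
    obtain ⟨⟨b1, b2, b3⟩, -⟩ := hz₀ b hb
    have ta := tan_pos_of_pos_of_lt_pi_div_two a1 a2
    have tb := tan_pos_of_pos_of_lt_pi_div_two b1 b2
    have hx : z₀ a * a < z₀ b * b := by
      by_contra! hle
      have h1 : tan (z₀ b * b) ≤ tan (z₀ a * a) :=
        strictMonoOn_tan.monotoneOn ⟨by linarith, b2⟩ ⟨by linarith, a2⟩ hle
      have za : 0 < z₀ a := pos_of_mul_pos_left a1 ha.le
      have zb : z₀ b < z₀ a := by
        by_contra! h
        nlinarith
      have h2 : z₀ b / b < z₀ a / a := by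
        rw [div_lt_div_iff₀ hb ha]
        nlinarith
      have h3 : tanh (z₀ b / b) < tanh (z₀ a / a) := aux_tanh h2
      have h4 : 0 < tanh (z₀ a / a) := pos_of_mul_pos_left (by rw [a3]; exact one_pos) ta.le
      nlinarith
    have h := aux_cot a1 hx b2
    have ea : tanh (z₀ a / a) = 1 / tan (z₀ a * a) := by rw [eq_div_iff ta.ne', a3]
    have eb : tanh (z₀ b / b) = 1 / tan (z₀ b * b) := by rw [eq_div_iff tb.ne', b3]
    simp only [ea, eb, mul_one_div]
    rwa [mul_comm a, mul_comm b]
  refine ⟨key, ?_⟩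
  intro a ha b hb hab
  have h := key ha hb hab
  simp only [Set.mem_Ioi] at ha hb h ⊢
  obtain ⟨⟨a1, a2, a3⟩, -⟩ := hz₀ a ha
  have ta := tan_pos_of_pos_of_lt_pi_div_two a1 a2
  have za : 0 < z₀ a := pos_of_mul_pos_left a1 ha.le
  have h4 : 0 < tanh (z₀ a / a) := pos_of_mul_pos_left (by rw [a3]; exact one_pos) ta.le
  have h5 := mul_pos za h4
  rw [mul_assoc, mul_assoc] at h
  by_contra! hle
  nlinarith
end

section
/- Let h₁, h₂ > 0. The function ω ↦ (h₁/2)·cot(ω h₂/2) + (h₂/2)·cot(ω h₁/2) + 2/ω is strictly decreasing from +∞ to −∞ on the interval (0, min{2π/h₁, 2π/h₂}), so the equation (h₁/2)·cot(ω h₂/2) + (h₂/2)·cot(ω h₁/2) + 2/ω = 0 has a unique solution ω₀ in this interval; moreover ω₀ > min{π/h₁, π/h₂}. -/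
open Real Filter

lemma aux_cot_anti : StrictAntiOn Real.cot (Set.Ioo 0 π) := by
  intro x hx y hy hxy
  have h1 := Real.sin_pos_of_pos_of_lt_pi hx.1 hx.2
  have h2 := Real.sin_pos_of_pos_of_lt_pi hy.1 hy.2
  have h3 : 0 < Real.sin (y - x) :=
    Real.sin_pos_of_pos_of_lt_pi (by linarith) (by linarith [hx.1, hy.2])
  rw [Real.sin_sub] at h3
  rw [Real.cot_eq_cos_div_sin, Real.cot_eq_cos_div_sin, div_lt_div_iff₀ h2 h1]
  linarith

lemma aux_cot_cont : ContinuousOn Real.cot (Set.Ioo 0 π) := by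
  have : Real.cot = fun x => Real.cos x / Real.sin x := by
    funext x; exact Real.cot_eq_cos_div_sin x
  rw [this]
  exact Real.continuous_cos.continuousOn.div Real.continuous_sin.continuousOn
    (fun x hx => (Real.sin_pos_of_pos_of_lt_pi hx.1 hx.2).ne')

lemma aux_cot_bot : Tendsto Real.cot (nhdsWithin π (Set.Ioo 0 π)) atBot := by
  have : Real.cot = fun x => Real.cos x * (Real.sin x)⁻¹ := by
    funext x; rw [Real.cot_eq_cos_div_sin, div_eq_mul_inv]
  rw [this]
  have hc : Tendsto Real.cos (nhdsWithin π (Set.Ioo 0 π)) (nhds (-1)) := by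
    have := (Real.continuous_cos.tendsto π).mono_left
      (nhdsWithin_le_nhds (s := Set.Ioo 0 π))
    rwa [Real.cos_pi] at this
  have hs : Tendsto Real.sin (nhdsWithin π (Set.Ioo 0 π)) (nhdsWithin 0 (Set.Ioi 0)) := by
    refine tendsto_nhdsWithin_iff.2 ⟨?_, ?_⟩
    · have := (Real.continuous_sin.tendsto π).mono_left
        (nhdsWithin_le_nhds (s := Set.Ioo 0 π))
      rwa [Real.sin_pi] at this
    · filter_upwards [self_mem_nhdsWithin] with x hx
      exact Real.sin_pos_of_pos_of_lt_pi hx.1 hx.2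
  exact hc.neg_mul_atTop (by norm_num) (tendsto_inv_nhdsGT_zero.comp hs)

lemma aux_mem {a b w : ℝ} (ha : 0 < a) (hb : 0 < b)
    (hw : w ∈ Set.Ioo 0 (min (2 * π / a) (2 * π / b))) :
    w * a / 2 ∈ Set.Ioo 0 π ∧ w * b / 2 ∈ Set.Ioo 0 π := by
  obtain ⟨h0, h1⟩ := hw
  rw [lt_min_iff, lt_div_iff₀ ha, lt_div_iff₀ hb] at h1
  exact ⟨⟨by positivity, by linarith [h1.1]⟩, ⟨by positivity, by linarith [h1.2]⟩⟩

lemma aux_cot_nonneg {x : ℝ} (h0 : 0 < x) (h1 : x ≤ π / 2) : 0 ≤ Real.cot x := by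
  rw [Real.cot_eq_cos_div_sin]
  exact div_nonneg (Real.cos_nonneg_of_neg_pi_div_two_le_of_le (by linarith) h1)
    (Real.sin_nonneg_of_nonneg_of_le_pi h0.le (by linarith))

lemma aux_lower {a b w : ℝ} (ha : 0 < a) (hb : 0 < b) (h0 : 0 < w)
    (hw : w ≤ min (π / a) (π / b)) :
    2 / w ≤ a / 2 * Real.cot (w * b / 2) + b / 2 * Real.cot (w * a / 2) + 2 / w := by
  rw [le_min_iff, le_div_iff₀ ha, le_div_iff₀ hb] at hw
  have h1 := aux_cot_nonneg (x := w * b / 2) (by positivity) (by linarith [hw.2])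
  have h2 := aux_cot_nonneg (x := w * a / 2) (by positivity) (by linarith [hw.1])
  have : 0 ≤ a / 2 * Real.cot (w * b / 2) := by positivity
  have : 0 ≤ b / 2 * Real.cot (w * a / 2) := by positivity
  linarith

lemma aux_anti (h₁ h₂ : ℝ) (hh₁ : 0 < h₁) (hh₂ : 0 < h₂) : StrictAntiOn
        (fun ω : ℝ => h₁ / 2 * Real.cot (ω * h₂ / 2) +
          h₂ / 2 * Real.cot (ω * h₁ / 2) + 2 / ω)
        (Set.Ioo 0 (min (2 * π / h₁) (2 * π / h₂))) := by
  intro x hx y hy hxy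
  obtain ⟨hx1, hx2⟩ := aux_mem hh₁ hh₂ hx
  obtain ⟨hy1, hy2⟩ := aux_mem hh₁ hh₂ hy
  have e1 := aux_cot_anti hx1 hy1 (by gcongr)
  have e2 := aux_cot_anti hx2 hy2 (by gcongr)
  have e3 : 2 / y < 2 / x := div_lt_div_of_pos_left (by norm_num) hx.1 hxy
  have e4 := mul_lt_mul_of_pos_left e1 (half_pos hh₂)
  have e5 := mul_lt_mul_of_pos_left e2 (half_pos hh₁)
  show _ + _ + _ < _ + _ + _
  linarith

lemma aux_bot (h₁ h₂ : ℝ) (hh₁ : 0 < h₁) (hh₂ : 0 < h₂) (hle : h₂ ≤ h₁) : Tendsto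
        (fun ω : ℝ => h₁ / 2 * Real.cot (ω * h₂ / 2) +
          h₂ / 2 * Real.cot (ω * h₁ / 2) + 2 / ω)
        (nhdsWithin (min (2 * π / h₁) (2 * π / h₂))
          (Set.Ioo 0 (min (2 * π / h₁) (2 * π / h₂)))) atBot := by
  have hpi := Real.pi_pos
  have hM : min (2 * π / h₁) (2 * π / h₂) = 2 * π / h₁ :=
    min_eq_left (div_le_div_of_nonneg_left (by positivity) hh₂ hle)
  set M := min (2 * π / h₁) (2 * π / h₂) with hMdef
  have hM0 : 0 < M := by rw [hM]; positivity
  have hMh : M * h₁ / 2 = π := by rw [hM]; field_simp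
  have hlim : Tendsto (fun ω : ℝ => ω * h₁ / 2) (nhdsWithin M (Set.Ioo 0 M))
      (nhdsWithin π (Set.Ioo 0 π)) := by
    refine tendsto_nhdsWithin_iff.2 ⟨?_, ?_⟩
    · have hc : Continuous (fun ω : ℝ => ω * h₁ / 2) := by fun_prop
      have := (hc.tendsto M).mono_left (nhdsWithin_le_nhds (s := Set.Ioo 0 M))
      simpa only [hMh] using this
    · filter_upwards [self_mem_nhdsWithin] with x hx
      exact (aux_mem hh₁ hh₂ hx).1
  have h1 : Tendsto (fun ω : ℝ => h₂ / 2 * Real.cot (ω * h₁ / 2))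
      (nhdsWithin M (Set.Ioo 0 M)) atBot :=
    (aux_cot_bot.comp hlim).const_mul_atBot (half_pos hh₂)
  have h2 := tendsto_atBot_add_const_left _
    (h₁ / 2 * Real.cot (M / 2 * h₂ / 2) + 2 / (M / 2)) h1
  refine tendsto_atBot_mono' _ ?_ h2
  have hn : Set.Ioi (M / 2) ∈ nhdsWithin M (Set.Ioo 0 M) :=
    mem_nhdsWithin_of_mem_nhds (Ioi_mem_nhds (by linarith))
  filter_upwards [self_mem_nhdsWithin, hn] with x hx hx2
  have hx2 : M / 2 < x := hx2
  have hm : M / 2 ∈ Set.Ioo 0 M := ⟨by linarith, by linarith⟩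
  have e2 := aux_cot_anti (aux_mem hh₁ hh₂ hm).2 (aux_mem hh₁ hh₂ hx).2 (by gcongr)
  have e5 := mul_lt_mul_of_pos_left e2 (half_pos hh₁)
  have e3 : 2 / x < 2 / (M / 2) := div_lt_div_of_pos_left (by norm_num) hm.1 hx2
  linarith

lemma aux_cont (h₁ h₂ : ℝ) (hh₁ : 0 < h₁) (hh₂ : 0 < h₂) : ContinuousOn
        (fun ω : ℝ => h₁ / 2 * Real.cot (ω * h₂ / 2) +
          h₂ / 2 * Real.cot (ω * h₁ / 2) + 2 / ω)
        (Set.Ioo 0 (min (2 * π / h₁) (2 * π / h₂))) := by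
  have c1 : ContinuousOn (fun ω : ℝ => Real.cot (ω * h₁ / 2))
      (Set.Ioo 0 (min (2 * π / h₁) (2 * π / h₂))) :=
    aux_cot_cont.comp (by fun_prop) (fun x hx => (aux_mem hh₁ hh₂ hx).1)
  have c2 : ContinuousOn (fun ω : ℝ => Real.cot (ω * h₂ / 2))
      (Set.Ioo 0 (min (2 * π / h₁) (2 * π / h₂))) :=
    aux_cot_cont.comp (by fun_prop) (fun x hx => (aux_mem hh₁ hh₂ hx).2)
  exact ((continuousOn_const.mul c2).add (continuousOn_const.mul c1)).add
    (continuousOn_const.div continuousOn_id (fun x hx => hx.1.ne'))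

/-- Let `h₁, h₂ > 0`. The function
`g : ω ↦ (h₁/2)·cot(ω h₂/2) + (h₂/2)·cot(ω h₁/2) + 2/ω` is strictly decreasing
from `+∞` to `−∞` on the interval `(0, min{2π/h₁, 2π/h₂})`, so the equation
`g ω = 0` has a unique solution `ω₀` in this interval; moreover
`ω₀ > min{π/h₁, π/h₂}`. -/
theorem cot_sum_unique_root (h₁ h₂ : ℝ) (hh₁ : 0 < h₁) (hh₂ : 0 < h₂) :
    StrictAntiOn
        (fun ω : ℝ => h₁ / 2 * Real.cot (ω * h₂ / 2) +
          h₂ / 2 * Real.cot (ω * h₁ / 2) + 2 / ω)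
        (Set.Ioo 0 (min (2 * π / h₁) (2 * π / h₂))) ∧
    Tendsto
        (fun ω : ℝ => h₁ / 2 * Real.cot (ω * h₂ / 2) +
          h₂ / 2 * Real.cot (ω * h₁ / 2) + 2 / ω)
        (nhdsWithin 0 (Set.Ioo 0 (min (2 * π / h₁) (2 * π / h₂)))) atTop ∧
    Tendsto
        (fun ω : ℝ => h₁ / 2 * Real.cot (ω * h₂ / 2) +
          h₂ / 2 * Real.cot (ω * h₁ / 2) + 2 / ω)
        (nhdsWithin (min (2 * π / h₁) (2 * π / h₂))
          (Set.Ioo 0 (min (2 * π / h₁) (2 * π / h₂)))) atBot ∧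
    (∃! ω₀ : ℝ, ω₀ ∈ Set.Ioo 0 (min (2 * π / h₁) (2 * π / h₂)) ∧
        h₁ / 2 * Real.cot (ω₀ * h₂ / 2) + h₂ / 2 * Real.cot (ω₀ * h₁ / 2) +
          2 / ω₀ = 0) ∧
    (∀ ω₀ ∈ Set.Ioo (0:ℝ) (min (2 * π / h₁) (2 * π / h₂)),
        h₁ / 2 * Real.cot (ω₀ * h₂ / 2) + h₂ / 2 * Real.cot (ω₀ * h₁ / 2) +
          2 / ω₀ = 0 → min (π / h₁) (π / h₂) < ω₀) := by
  have hpi := Real.pi_pos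
  have hM0 : 0 < min (2 * π / h₁) (2 * π / h₂) := lt_min (by positivity) (by positivity)
  have hm0 : 0 < min (π / h₁) (π / h₂) := lt_min (by positivity) (by positivity)
  have hanti := aux_anti h₁ h₂ hh₁ hh₂
  have hcont := aux_cont h₁ h₂ hh₁ hh₂
  have htop : Tendsto
        (fun ω : ℝ => h₁ / 2 * Real.cot (ω * h₂ / 2) +
          h₂ / 2 * Real.cot (ω * h₁ / 2) + 2 / ω)
        (nhdsWithin 0 (Set.Ioo 0 (min (2 * π / h₁) (2 * π / h₂)))) atTop := by
    rw [nhdsWithin_Ioo_eq_nhdsGT hM0]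
    have h2 : Tendsto (fun ω : ℝ => 2 / ω) (nhdsWithin 0 (Set.Ioi 0)) atTop := by
      simp only [div_eq_mul_inv]
      exact tendsto_inv_nhdsGT_zero.const_mul_atTop (by norm_num)
    refine tendsto_atTop_mono' _ ?_ h2
    filter_upwards [Ioo_mem_nhdsGT hm0] with x hx
    exact aux_lower hh₁ hh₂ hx.1 hx.2.le
  have hbot : Tendsto
        (fun ω : ℝ => h₁ / 2 * Real.cot (ω * h₂ / 2) +
          h₂ / 2 * Real.cot (ω * h₁ / 2) + 2 / ω)
        (nhdsWithin (min (2 * π / h₁) (2 * π / h₂))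
          (Set.Ioo 0 (min (2 * π / h₁) (2 * π / h₂)))) atBot := by
    rcases le_total h₂ h₁ with h | h
    · exact aux_bot h₁ h₂ hh₁ hh₂ h
    · have := aux_bot h₂ h₁ hh₂ hh₁ h
      rw [min_comm (2 * π / h₂)] at this
      refine this.congr fun x => ?_
      ring
  refine ⟨hanti, htop, hbot, ?_, ?_⟩
  · have n1 : (nhdsWithin 0 (Set.Ioo 0 (min (2 * π / h₁) (2 * π / h₂)))).NeBot := by
      rw [nhdsWithin_Ioo_eq_nhdsGT hM0]; infer_instance
    have n2 : (nhdsWithin (min (2 * π / h₁) (2 * π / h₂))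
          (Set.Ioo 0 (min (2 * π / h₁) (2 * π / h₂)))).NeBot := by
      rw [nhdsWithin_Ioo_eq_nhdsLT hM0]; infer_instance
    obtain ⟨a, ha, ha'⟩ := ((htop.eventually_ge_atTop 0).and self_mem_nhdsWithin).exists
    obtain ⟨b, hb, hb'⟩ := ((hbot.eventually_le_atBot 0).and self_mem_nhdsWithin).exists
    obtain ⟨c, hc, hc'⟩ := isPreconnected_Ioo.intermediate_value hb' ha' hcont ⟨hb, ha⟩
    refine ⟨c, ⟨hc, hc'⟩, ?_⟩
    rintro y ⟨hy, hy'⟩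
    exact hanti.injOn hy hc (hy'.trans hc'.symm)
  · intro w hw h0
    by_contra hcon
    have := aux_lower hh₁ hh₂ hw.1 (not_lt.1 hcon)
    have h2 : 0 < 2 / w := div_pos (by norm_num) hw.1
    linarith
end

section
/- The equation z·cot(z) + 1 = 0 has a unique root z̃₀ in the interval (0, π), and this root satisfies z̃₀ < π/√2. (Equivalently, since t ↦ t·cot(t) is strictly decreasing on (0,π), it suffices that (π/√2)·cot(π/√2) < −1.) -/
open Real

lemma aux_iff {z : ℝ} (hz : z ∈ Set.Ioo 0 π) :
    z * Real.cot z + 1 = 0 ↔ z * cos z + sin z = 0 := by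
  have hs : sin z ≠ 0 := (sin_pos_of_pos_of_lt_pi hz.1 hz.2).ne'
  rw [Real.cot_eq_cos_div_sin]
  field_simp
  rw [mul_zero]

lemma aux_gt {z : ℝ} (hz : z ∈ Set.Ioo 0 π) (h : z * cos z + sin z = 0) : π / 2 < z := by
  by_contra! hc
  have hs : 0 < sin z := sin_pos_of_pos_of_lt_pi hz.1 hz.2
  have hcos : 0 ≤ cos z := cos_nonneg_of_neg_pi_div_two_le_of_le (by linarith [hz.1, pi_pos]) hc
  have := mul_nonneg hz.1.le hcos
  linarith

lemma aux_lt {a b : ℝ} (ha : a ∈ Set.Ioo 0 π) (hb : b ∈ Set.Ioo 0 π)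
    (h : a * cos a + sin a = 0) (h' : b * cos b + sin b = 0) : ¬ a < b := by
  intro hab
  have h1 := aux_gt ha h
  have h2 : cos b < cos a := cos_lt_cos_of_nonneg_of_le_pi ha.1.le hb.2.le hab
  have h3 : sin b < sin a := by
    have := cos_lt_cos_of_nonneg_of_le_pi (x := a - π / 2) (y := b - π / 2)
      (by linarith) (by linarith [hb.2, pi_pos]) (by linarith)
    rwa [cos_sub_pi_div_two, cos_sub_pi_div_two] at this
  have h4 : cos b < 0 := cos_neg_of_pi_div_two_lt_of_lt (by linarith) (by linarith [hb.2, pi_pos])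
  nlinarith [ha.1]

/-- The equation `z·cot z + 1 = 0` has a unique root `z̃₀` in the interval
`(0,π)`, and this root satisfies `z̃₀ < π/√2`. -/
theorem z_cot_z_add_one_unique_root :
    (∃! z : ℝ, z ∈ Set.Ioo 0 π ∧ z * Real.cot z + 1 = 0) ∧
    (∀ z ∈ Set.Ioo (0:ℝ) π, z * Real.cot z + 1 = 0 → z < π / Real.sqrt 2) := by
  have hpi := pi_pos
  refine ⟨?_, ?_⟩
  · have hc : ContinuousOn (fun z : ℝ => z * cos z + sin z) (Set.Icc (π / 2) π) := by fun_prop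
    obtain ⟨z, hz, h⟩ := intermediate_value_Ioo' (by linarith) hc
      (show (0:ℝ) ∈ Set.Ioo _ _ by simp [hpi])
    have hz' : z ∈ Set.Ioo 0 π := ⟨by linarith [hz.1], hz.2⟩
    refine ⟨z, ⟨hz', (aux_iff hz').2 h⟩, ?_⟩
    rintro y ⟨hy, hy'⟩
    rw [aux_iff hy] at hy'
    exact le_antisymm (not_lt.1 (aux_lt hz' hy h hy')) (not_lt.1 (aux_lt hy hz' hy' h))
  · intro z hz h
    rw [aux_iff hz] at h
    by_contra! hc
    have hs2 : √2 < 1.42 := by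
      rw [Real.sqrt_lt' (by norm_num)]; norm_num
    have hp : 0 < √2 := by positivity
    have h22 : 2.2 ≤ z := by
      refine le_trans ?_ hc
      rw [le_div_iff₀ hp]
      linarith [pi_gt_d2]
    have h1 := sin_gt_sub_cube (x := 0.6) (by norm_num)
    have h2 : sin 0.6 ≤ sin (z - π / 2) :=
      sin_le_sin_of_le_of_le_pi_div_two (by linarith) (by linarith [hz.2])
        (by linarith [pi_lt_d2])
    rw [sin_sub_pi_div_two] at h2
    have h3 := sin_le_one z
    norm_num at h1 h2
    nlinarith
end
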